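/- arXiv:1712.07361 — 3 statements merged into one kernel-verified Lean document; each statement's English description precedes it below -/
import Mathlib

section
/- Let ρ be an exchangeable probability measure on S^∞ with directing random measure p̃. Assume that, for some p ≥ 1, p̂_n ∈ [S]_p for all n and p̃ ∈ [S]_p with ρ-probability 1, and let {b_n} be an increasing, diverging sequence of positive numbers such that, with ρ-probability 1, E_{p̃^∞}[ ( sup_{n≥1} b_n d^{(p)}(p̃, p̂_n) )^p ] ≤ C_p(p̃) and p̃^∞( limsup_{n→∞} b_n d^{(p)}(p̃, p̂_n) ≤ Y_p(p̃) ) = 1, where C_p(p̃) and Y_p(p̃) are real random variables with ρ[C_p(p̃)] < +∞. Then for every m ∈ ℕ, ρ( limsup_{n→∞} b_n · d^{(p)}_{[[S]_p]}( q_m(ξ^(n)), p̂_n^∞ ∘ ẽ_{n,m}^{−1} ) ≤ Y_p(p̃) ) = 1. -/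
open MeasureTheory ProbabilityTheory
open scoped ENNReal

noncomputable section

/-- The `p`-Wasserstein-type distance associated with a cost function `c`. -/
noncomputable def wassW {X : Type*} [MeasurableSpace X] (c : X → X → ℝ) (p : ℝ)
    (μ ν : Measure X) : ℝ :=
  sInf {r : ℝ | ∃ γ : Measure (X × X), γ.map Prod.fst = μ ∧ γ.map Prod.snd = ν ∧
    r = (∫ z, c z.1 z.2 ^ p ∂γ) ^ (1 / p)}

/-- Membership in `[S]_p`: a Borel probability measure with finite `p`-th moment. -/
def MemWp {S : Type*} [MeasurableSpace S] [MetricSpace S] (p : ℝ) (𝔭 : Measure S) : Prop :=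
  IsProbabilityMeasure 𝔭 ∧ ∃ x₀ : S, Integrable (fun x => dist x x₀ ^ p) 𝔭

/-- The empirical measure `ẽ_{n,m}(ω) = (1/m) Σ_{i=1}^m δ_{ω_{i+n}}`. -/
noncomputable def empShift {S : Type*} [MeasurableSpace S] (n m : ℕ) (ω : ℕ → S) :
    Measure S :=
  (m : ℝ≥0∞)⁻¹ • ∑ i ∈ Finset.range m, Measure.dirac (ω (i + n))

set_option linter.unusedSectionVars false


/-- full-measure sigma-compact set -/
lemma exists_full_sigma {S : Type*} [MetricSpace S] [MeasurableSpace S] [BorelSpace S]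
    (μ : Measure S) [IsProbabilityMeasure μ] (h : μ.InnerRegular) :
    ∃ K : ℕ → Set S, (∀ n, IsCompact (K n)) ∧ μ (⋃ n, K n)ᶜ = 0 := by
  have h1 : ∀ n : ℕ, ∃ K : Set S, IsCompact K ∧ 1 - (1 / ((n : ℝ≥0∞) + 1)) < μ K := by
    intro n
    have := h.innerRegular MeasurableSet.univ (1 - (1 / ((n : ℝ≥0∞) + 1))) (by
      rw [measure_univ]
      refine ENNReal.sub_lt_self (by simp) (by simp) ?_
      simp)
    obtain ⟨K, -, hK, h2⟩ := this
    exact ⟨K, hK, h2⟩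
  choose K hK hK2 using h1
  refine ⟨K, hK, ?_⟩
  have hm : MeasurableSet (⋃ n, K n) := MeasurableSet.iUnion fun n => (hK n).measurableSet
  rw [prob_compl_eq_zero_iff hm]
  refine le_antisymm prob_le_one ?_
  have ht : Filter.Tendsto (fun n : ℕ => 1 - (1 / ((n : ℝ≥0∞) + 1))) Filter.atTop (nhds (1 - 0)) := by
    refine ENNReal.Tendsto.sub tendsto_const_nhds ?_ (Or.inl (by simp))
    have := ENNReal.tendsto_inv_nat_nhds_zero.comp (Filter.tendsto_add_atTop_nat 1)
    refine this.congr fun n => ?_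
    simp
  rw [tsub_zero] at ht
  exact le_of_tendsto' ht fun n => (hK2 n).le.trans (measure_mono (Set.subset_iUnion K n))

lemma standardBorel_of_equiv {α β : Type*} [MeasurableSpace α] [mβ : MeasurableSpace β]
    [StandardBorelSpace β] (e : α ≃ᵐ β) : StandardBorelSpace α := by
  obtain ⟨τ, hb, hp⟩ := StandardBorelSpace.polish (α := β)
  refine ⟨⟨τ.induced e, ?_, ?_⟩⟩
  · let _ : TopologicalSpace α := τ.induced e
    refine ⟨?_⟩
    rw [borel_comap, ← hb.measurable_eq]
    exact e.measurableEmbedding.comap_eq.symm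
  · let _ : TopologicalSpace α := τ.induced e
    have h : Topology.IsInducing e := ⟨rfl⟩
    exact (Equiv.toHomeomorphOfIsInducing e.toEquiv h).isClosedEmbedding.polishSpace

lemma standardBorel_sigma {S : Type*} [MetricSpace S] [TopologicalSpace.SeparableSpace S]
    [MeasurableSpace S] [BorelSpace S]
    (K : ℕ → Set S) (hK : ∀ n, IsCompact (K n)) : StandardBorelSpace (⋃ n, K n : Set S) := by
  let C := UniformSpace.Completion S
  let _ : MeasurableSpace C := borel C
  have : BorelSpace C := ⟨rfl⟩
  have : SecondCountableTopology C := UniformSpace.secondCountable_of_separable C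
  let f : (⋃ n, K n : Set S) → C := fun x => ((x : S) : C)
  have hf : Topology.IsEmbedding f :=
    (UniformSpace.Completion.coe_isometry (α := S)).isEmbedding.comp Topology.IsEmbedding.subtypeVal
  have hr : MeasurableSet (Set.range f) := by
    have : Set.range f = ⋃ n, (fun x : S => (x : C)) '' (K n) := by
      ext y; simp [f]; aesop
    rw [this]
    exact MeasurableSet.iUnion fun n =>
      ((hK n).image (UniformSpace.Completion.continuous_coe S)).measurableSet
  have he : MeasurableEmbedding f := hf.measurableEmbedding hr
  have : StandardBorelSpace (Set.range f) := hr.standardBorel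
  exact standardBorel_of_equiv he.equivRange

lemma exists_posterior {S : Type*} [MetricSpace S] [TopologicalSpace.SeparableSpace S]
    [MeasurableSpace S] [BorelSpace S]
    (hRadon : ∀ μ : Measure S, IsProbabilityMeasure μ → μ.InnerRegular)
    (ρ : Measure (ℕ → S)) [IsProbabilityMeasure ρ] {β : Type*} [MeasurableSpace β]
    (X : (ℕ → S) → β) (hX : Measurable X) :
    ∃ Q : Kernel β (ℕ → S), IsMarkovKernel Q ∧
      ρ.map (fun ω => (X ω, ω)) = (ρ.map X) ⊗ₘ Q := by
  classical
  have h1 : ∀ i : ℕ, ∃ K : ℕ → Set S, (∀ n, IsCompact (K n)) ∧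
      (ρ.map (fun ω => ω i)) (⋃ n, K n)ᶜ = 0 := fun i => by
    have : IsProbabilityMeasure (ρ.map (fun ω => ω i)) :=
      Measure.isProbabilityMeasure_map (measurable_pi_apply i).aemeasurable
    exact exists_full_sigma _ (hRadon _ inferInstance)
  choose L hL hL0 using h1
  let K : ℕ → Set S := fun n => L (n.unpair.1) (n.unpair.2)
  have hK : ∀ n, IsCompact (K n) := fun n => hL _ _
  let T : Set S := ⋃ n, K n
  have hT : MeasurableSet T := MeasurableSet.iUnion fun n => (hK n).measurableSet
  have : StandardBorelSpace T := standardBorel_sigma K hK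
  have hae : ∀ᵐ ω ∂ρ, ∀ i, ω i ∈ T := by
    rw [ae_all_iff]
    intro i
    have h2 : ∀ᵐ x ∂(ρ.map (fun ω => ω i)), x ∈ T := by
      refine measure_mono_null ?_ (hL0 i)
      intro x hx hx2
      refine hx ?_
      obtain ⟨n, hn⟩ := Set.mem_iUnion.1 hx2
      refine Set.mem_iUnion.2 ⟨Nat.pair i n, ?_⟩
      simpa [K] using hn
    exact ae_of_ae_map (measurable_pi_apply i).aemeasurable h2
  obtain ⟨ω₀, hω₀⟩ := hae.exists
  let t₀ : T := ⟨ω₀ 0, hω₀ 0⟩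
  let r : S → T := fun x => if h : x ∈ T then ⟨x, h⟩ else t₀
  have hr : Measurable r := Measurable.dite (s := T) (f := fun x => x) (g := fun _ => t₀) measurable_id measurable_const hT
  let Y : (ℕ → S) → (ℕ → T) := fun ω i => r (ω i)
  have hY : Measurable Y := by
    refine measurable_pi_lambda _ fun i => hr.comp (by fun_prop)
  have : Nonempty (ℕ → T) := ⟨fun _ => t₀⟩
  let J : (ℕ → T) → (ℕ → S) := fun z i => z i
  have hJ : Measurable J := by
    refine measurable_pi_lambda _ fun i => measurable_subtype_coe.comp (by fun_prop)
  refine ⟨(condDistrib Y X ρ).map J, Kernel.IsMarkovKernel.map _ hJ, ?_⟩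
  have h3 := compProd_map_condDistrib (mβ := inferInstance) (X := X) (μ := ρ) hY.aemeasurable
  rw [Measure.compProd_map hJ, h3, Measure.map_map (by fun_prop) (by fun_prop)]
  refine Measure.map_congr ?_
  filter_upwards [hae] with ω hω
  simp only [Function.comp, Prod.map, id]
  congr 1
  funext i
  simp [J, Y, r, hω i]

/-- the first `n` coordinates -/
def firstN {S : Type*} (n : ℕ) (ω : ℕ → S) : Fin n → S := fun i => ω (i : ℕ)

lemma measurable_firstN {S : Type*} [MeasurableSpace S] (n : ℕ) :
    Measurable (firstN (S := S) n) :=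
  measurable_pi_lambda _ fun i => measurable_pi_apply (i : ℕ)

/-- filtration generated by coordinates -/
def coordFilt (S : Type*) [MeasurableSpace S] :
    Filtration ℕ (MeasurableSpace.pi : MeasurableSpace (ℕ → S)) where
  seq n := MeasurableSpace.comap (firstN n) inferInstance
  mono' := by
    intro a b hab
    have h : firstN (S := S) a = (fun v i => v (Fin.castLE hab i)) ∘ firstN b := by
      funext ω i; rfl
    show MeasurableSpace.comap (firstN a) _ ≤ _
    rw [h, ← MeasurableSpace.comap_comp]
    refine MeasurableSpace.comap_mono ?_
    rw [← measurable_iff_comap_le]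
    exact measurable_pi_lambda _ fun i => measurable_pi_apply _
  le' n := (measurable_firstN n).comap_le

lemma iSup_coordFilt (S : Type*) [MeasurableSpace S] :
    (⨆ n, coordFilt S n) = MeasurableSpace.pi := by
  refine le_antisymm (iSup_le fun n => (coordFilt S).le n) ?_
  refine iSup_le fun i => ?_
  refine le_trans ?_ (le_iSup (fun n => (coordFilt S n : MeasurableSpace (ℕ → S))) (i + 1))
  have h : (fun ω : ℕ → S => ω i) = (fun v => v ⟨i, Nat.lt_succ_self i⟩) ∘ firstN (i + 1) := by
    funext ω; rfl
  show MeasurableSpace.comap (fun ω : ℕ → S => ω i) _ ≤ MeasurableSpace.comap (firstN (i + 1)) _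
  rw [h, ← MeasurableSpace.comap_comp]
  refine MeasurableSpace.comap_mono ?_
  rw [← measurable_iff_comap_le]
  exact measurable_pi_apply _

lemma levy_posterior {S : Type*} [MeasurableSpace S]
    (ρ : Measure (ℕ → S)) [IsProbabilityMeasure ρ]
    (Q : (n : ℕ) → Kernel (Fin n → S) (ℕ → S)) [∀ n, IsMarkovKernel (Q n)]
    (hQ : ∀ n, ρ.map (fun ω => (firstN n ω, ω)) = (ρ.map (firstN n)) ⊗ₘ Q n)
    (U : (ℕ → S) → ℝ≥0∞) (hU : Measurable U) (hUi : ∫⁻ ω, U ω ∂ρ ≠ ∞) :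
    ∀ᵐ ω ∂ρ, Filter.Tendsto (fun n => ∫⁻ ω', U ω' ∂(Q n (firstN n ω))) Filter.atTop
      (nhds (U ω)) := by
  have hset : ∀ n (A : Set (Fin n → S)), MeasurableSet A →
      ∫⁻ ω in firstN n ⁻¹' A, ∫⁻ ω', U ω' ∂(Q n (firstN n ω)) ∂ρ
        = ∫⁻ ω in firstN n ⁻¹' A, U ω ∂ρ := by
    intro n A hA
    have hU2 : Measurable fun z : (Fin n → S) × (ℕ → S) => U z.2 := hU.comp measurable_snd
    have h1 : ∫⁻ z in A ×ˢ Set.univ, U z.2 ∂(ρ.map (fun ω => (firstN n ω, ω)))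
        = ∫⁻ ω in firstN n ⁻¹' A, U ω ∂ρ := by
      have hg : Measurable fun ω : ℕ → S => (firstN n ω, ω) :=
        (measurable_firstN n).prodMk measurable_id
      rw [setLIntegral_map (hA.prod MeasurableSet.univ) hU2 hg]
      congr 2
      ext ω; simp
    rw [← h1, hQ, Measure.setLIntegral_compProd hU2 hA MeasurableSet.univ,
      setLIntegral_map hA (by
        simp only [Measure.restrict_univ]
        exact Measurable.lintegral_kernel hU) (measurable_firstN n)]
    simp
  have hem : ∀ n, Measurable[coordFilt S n] fun ω => ∫⁻ ω', U ω' ∂(Q n (firstN n ω)) := by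
    intro n
    have h : Measurable fun v => ∫⁻ ω', U ω' ∂(Q n v) := Measurable.lintegral_kernel hU
    exact h.comp (comap_measurable _)
  have heint : ∀ n, ∫⁻ ω, ∫⁻ ω', U ω' ∂(Q n (firstN n ω)) ∂ρ ≠ ∞ := by
    intro n
    have := hset n Set.univ MeasurableSet.univ
    simp only [Set.preimage_univ, Measure.restrict_univ] at this
    rwa [this]
  have hem' : ∀ n, Measurable fun ω => ∫⁻ ω', U ω' ∂(Q n (firstN n ω)) := fun n =>
    (hem n).mono ((coordFilt S).le n) le_rfl
  have hfin : ∀ᵐ ω ∂ρ, ∀ n, ∫⁻ ω', U ω' ∂(Q n (firstN n ω)) < ∞ :=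
    ae_all_iff.2 fun n => ae_lt_top (hem' n) (heint n)
  have hUfin : ∀ᵐ ω ∂ρ, U ω < ∞ := ae_lt_top hU hUi
  have hUint : Integrable (fun ω => (U ω).toReal) ρ := integrable_toReal_of_lintegral_ne_top
    hU.aemeasurable hUi
  have hce : ∀ n, (fun ω => (∫⁻ ω', U ω' ∂(Q n (firstN n ω))).toReal)
      =ᵐ[ρ] ρ[fun ω => (U ω).toReal | coordFilt S n] := by
    intro n
    refine ae_eq_condExp_of_forall_setIntegral_eq ((coordFilt S).le n) hUint ?_ ?_ ?_
    · intro s hs _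
      exact (integrable_toReal_of_lintegral_ne_top (hem' n).aemeasurable (heint n)).integrableOn
    · rintro s ⟨A, hA, rfl⟩ _
      rw [integral_toReal (hem' n).aemeasurable
          (ae_restrict_of_ae (hfin.mono fun ω h => h n)),
        integral_toReal hU.aemeasurable (ae_restrict_of_ae hUfin), hset n A hA]
    · exact ((hem n).ennreal_toReal.stronglyMeasurable).aestronglyMeasurable
  have hlim := hUint.tendsto_ae_condExp (ℱ := coordFilt S) (by
    rw [iSup_coordFilt]
    exact hU.ennreal_toReal.stronglyMeasurable)
  filter_upwards [hlim, ae_all_iff.2 hce, hfin, hUfin] with ω h1 h2 h3 h4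
  have h5 := h1.congr fun n => (h2 n).symm
  have h6 := ENNReal.tendsto_ofReal h5
  rw [ENNReal.ofReal_toReal h4.ne] at h6
  exact h6.congr fun n => ENNReal.ofReal_toReal (h3 n).ne

section coupling
variable {X Y : Type*} [MeasurableSpace X] [MeasurableSpace Y]

/-- coupling density completing a sub-coupling density `f` -/
noncomputable def resF (P : Measure X) (Q : Measure Y) (f : X × Y → ℝ≥0∞) (z : X × Y) : ℝ≥0∞ :=
  f z + (1 - ∫⁻ x, ∫⁻ y, f (x, y) ∂Q ∂P)⁻¹ *
    ((1 - ∫⁻ y, f (z.1, y) ∂Q) * (1 - ∫⁻ x, f (x, z.2) ∂P))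

lemma measurable_resF (P : Measure X) (Q : Measure Y) [IsProbabilityMeasure P]
    [IsProbabilityMeasure Q] (f : X × Y → ℝ≥0∞) (hf : Measurable f) :
    Measurable (resF P Q f) := by
  have h1 : Measurable fun x => ∫⁻ y, f (x, y) ∂Q := hf.lintegral_prod_right'
  have h2 : Measurable fun y => ∫⁻ x, f (x, y) ∂P := hf.lintegral_prod_left'
  unfold resF
  fun_prop

lemma lintegral_res {P : Measure X} {Q : Measure Y} [IsProbabilityMeasure P]
    [IsProbabilityMeasure Q] {f : X × Y → ℝ≥0∞} (hf : Measurable f)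
    (hg : ∀ᵐ x ∂P, ∫⁻ y, f (x, y) ∂Q ≤ 1) :
    ∫⁻ x, (1 - ∫⁻ y, f (x, y) ∂Q) ∂P = 1 - ∫⁻ x, ∫⁻ y, f (x, y) ∂Q ∂P := by
  have h1 : Measurable fun x => ∫⁻ y, f (x, y) ∂Q := hf.lintegral_prod_right'
  rw [lintegral_sub h1]
  · simp
  · refine ne_top_of_le_ne_top ENNReal.one_ne_top ((lintegral_mono_ae hg).trans (by simp))
  · exact hg

lemma lintegral_res' {P : Measure X} {Q : Measure Y} [IsProbabilityMeasure P]
    [IsProbabilityMeasure Q] {f : X × Y → ℝ≥0∞} (hf : Measurable f)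
    (hh : ∀ᵐ y ∂Q, ∫⁻ x, f (x, y) ∂P ≤ 1) :
    ∫⁻ y, (1 - ∫⁻ x, f (x, y) ∂P) ∂Q = 1 - ∫⁻ x, ∫⁻ y, f (x, y) ∂Q ∂P := by
  have := lintegral_res (P := Q) (Q := P) (f := f ∘ Prod.swap) (hf.comp measurable_swap) hh
  rw [lintegral_lintegral_swap (f := fun x y => f (x, y)) hf.aemeasurable]
  exact this

lemma resF_fst {P : Measure X} {Q : Measure Y} [IsProbabilityMeasure P]
    [IsProbabilityMeasure Q] {f : X × Y → ℝ≥0∞} (hf : Measurable f)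
    (hg : ∀ᵐ x ∂P, ∫⁻ y, f (x, y) ∂Q ≤ 1) (hh : ∀ᵐ y ∂Q, ∫⁻ x, f (x, y) ∂P ≤ 1) :
    ((P.prod Q).withDensity (resF P Q f)).map Prod.fst = P := by
  have h1 : Measurable fun x => ∫⁻ y, f (x, y) ∂Q := hf.lintegral_prod_right'
  have h2 : Measurable fun y => ∫⁻ x, f (x, y) ∂P := hf.lintegral_prod_left'
  have key : ∀ᵐ x ∂P, ∫⁻ y, resF P Q f (x, y) ∂Q = 1 := by
    set M := ∫⁻ x, ∫⁻ y, f (x, y) ∂Q ∂P with hM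
    have hform : ∀ x, ∫⁻ y, resF P Q f (x, y) ∂Q = ∫⁻ y, f (x, y) ∂Q +
        (1 - M)⁻¹ * ((1 - ∫⁻ y, f (x, y) ∂Q) * (1 - M)) := by
      intro x
      simp only [resF, ← hM]
      rw [lintegral_add_left (by fun_prop), lintegral_const_mul _ (by fun_prop),
        lintegral_const_mul _ (by fun_prop), lintegral_res' hf hh]
    by_cases h0 : 1 - M = 0
    · have hz : ∀ᵐ x ∂P, 1 - ∫⁻ y, f (x, y) ∂Q = 0 := by
        have h3 := lintegral_res hf hg
        rw [← hM, h0, lintegral_eq_zero_iff (by fun_prop)] at h3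
        exact h3
      filter_upwards [hg, hz] with x hx1 hx2
      rw [hform, hx2]
      simp only [zero_mul, mul_zero, add_zero]
      exact le_antisymm hx1 (tsub_eq_zero_iff_le.1 hx2)
    · filter_upwards [hg] with x hx1
      rw [hform, mul_comm (1 - ∫⁻ y, f (x, y) ∂Q), ← mul_assoc, ENNReal.inv_mul_cancel h0
        (by simp), one_mul, add_tsub_cancel_of_le hx1]
  ext A hA
  rw [Measure.map_apply measurable_fst hA, withDensity_apply _ (measurable_fst hA),
    ← Set.prod_univ, setLIntegral_prod _ (measurable_resF P Q f hf).aemeasurable]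
  simp only [Measure.restrict_univ]
  rw [setLIntegral_congr_fun_ae hA (g := fun _ => 1) (key.mono fun x hx _ => hx)]
  simp

lemma resF_snd {P : Measure X} {Q : Measure Y} [IsProbabilityMeasure P]
    [IsProbabilityMeasure Q] {f : X × Y → ℝ≥0∞} (hf : Measurable f)
    (hg : ∀ᵐ x ∂P, ∫⁻ y, f (x, y) ∂Q ≤ 1) (hh : ∀ᵐ y ∂Q, ∫⁻ x, f (x, y) ∂P ≤ 1) :
    ((P.prod Q).withDensity (resF P Q f)).map Prod.snd = Q := by
  have h := resF_fst (P := Q) (Q := P) (f := f ∘ Prod.swap) (hf.comp measurable_swap) hh hg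
  have hs : resF P Q f = resF Q P (f ∘ Prod.swap) ∘ Prod.swap := by
    funext z
    simp only [resF, Function.comp, Prod.swap]
    rw [lintegral_lintegral_swap (f := fun x y => f (x, y)) hf.aemeasurable, mul_comm (1 - ∫⁻ y, f (z.1, y) ∂Q)]
  conv_rhs => rw [← h]
  ext A hA
  rw [Measure.map_apply measurable_snd hA, withDensity_apply _ (measurable_snd hA),
    Measure.map_apply measurable_fst hA, withDensity_apply _ (measurable_fst hA), hs,
    ← Measure.prod_swap (μ := Q) (ν := P), setLIntegral_map (measurable_snd hA)
      ((measurable_resF Q P _ (hf.comp measurable_swap)).comp measurable_swap) measurable_swap]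
  rfl

lemma resF_cost {P : Measure X} {Q : Measure Y} [IsProbabilityMeasure P]
    [IsProbabilityMeasure Q] {f : X × Y → ℝ≥0∞} (hf : Measurable f)
    (hg : ∀ᵐ x ∂P, ∫⁻ y, f (x, y) ∂Q ≤ 1) (hh : ∀ᵐ y ∂Q, ∫⁻ x, f (x, y) ∂P ≤ 1)
    {c : X × Y → ℝ≥0∞} (hc : Measurable c) {a : X → ℝ≥0∞} (ha : Measurable a)
    {b : Y → ℝ≥0∞} (hb : Measurable b) (hcab : ∀ z, c z ≤ a z.1 + b z.2) :
    ∫⁻ z, c z ∂((P.prod Q).withDensity (resF P Q f)) ≤ ∫⁻ z, f z * c z ∂(P.prod Q)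
      + (∫⁻ x, a x * (1 - ∫⁻ y, f (x, y) ∂Q) ∂P + ∫⁻ y, b y * (1 - ∫⁻ x, f (x, y) ∂P) ∂Q) := by
  have h1 : Measurable fun x => ∫⁻ y, f (x, y) ∂Q := hf.lintegral_prod_right'
  have h2 : Measurable fun y => ∫⁻ x, f (x, y) ∂P := hf.lintegral_prod_left'
  rw [lintegral_withDensity_eq_lintegral_mul _ (measurable_resF P Q f hf) hc]
  have e1 := lintegral_res hf hg
  have e2 := lintegral_res' hf hh
  set M := ∫⁻ x, ∫⁻ y, f (x, y) ∂Q ∂P with hM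
  have hle : ∀ z : X × Y, (resF P Q f * c) z ≤ f z * c z + (1 - M)⁻¹ *
      ((a z.1 * (1 - ∫⁻ y, f (z.1, y) ∂Q)) * (1 - ∫⁻ x, f (x, z.2) ∂P) +
       (1 - ∫⁻ y, f (z.1, y) ∂Q) * (b z.2 * (1 - ∫⁻ x, f (x, z.2) ∂P))) := by
    intro z
    simp only [Pi.mul_apply, resF, add_mul, ← hM]
    refine add_le_add le_rfl ?_
    refine (mul_le_mul_right (hcab z) _).trans (le_of_eq ?_)
    ring
  refine (lintegral_mono hle).trans ?_
  rw [lintegral_add_left (by fun_prop), lintegral_const_mul _ (by fun_prop),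
    lintegral_add_left (by fun_prop),
    lintegral_prod_mul (f := fun x => a x * (1 - ∫⁻ y, f (x, y) ∂Q))
      (g := fun y => 1 - ∫⁻ x, f (x, y) ∂P) (by fun_prop) (by fun_prop),
    lintegral_prod_mul (f := fun x => 1 - ∫⁻ y, f (x, y) ∂Q)
      (g := fun y => b y * (1 - ∫⁻ x, f (x, y) ∂P)) (by fun_prop) (by fun_prop), e1, e2]
  gcongr
  set A := ∫⁻ x, a x * (1 - ∫⁻ y, f (x, y) ∂Q) ∂P
  set B := ∫⁻ y, b y * (1 - ∫⁻ x, f (x, y) ∂P) ∂Q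
  calc (1 - M)⁻¹ * (A * (1 - M) + (1 - M) * B) = ((1 - M)⁻¹ * (1 - M)) * (A + B) := by ring
    _ ≤ 1 * (A + B) := by gcongr; exact ENNReal.inv_mul_le_one _
    _ = A + B := one_mul _

/-- the coupling -/
noncomputable def famC (f : X × Y → ℝ≥0∞) (a : ProbabilityMeasure X × ProbabilityMeasure Y) :
    Measure (X × Y) :=
  open Classical in
  if ((a.1 : Measure X) {x | 1 < ∫⁻ y, f (x, y) ∂(a.2 : Measure Y)} = 0 ∧
      (a.2 : Measure Y) {y | 1 < ∫⁻ x, f (x, y) ∂(a.1 : Measure X)} = 0) then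
    ((a.1 : Measure X).prod (a.2 : Measure Y)).withDensity (resF a.1 a.2 f)
  else (a.1 : Measure X).prod (a.2 : Measure Y)

lemma famC_fst (f : X × Y → ℝ≥0∞) (hf : Measurable f)
    (a : ProbabilityMeasure X × ProbabilityMeasure Y) : (famC f a).map Prod.fst = a.1 := by
  unfold famC
  split_ifs with h
  · exact resF_fst hf (by simpa [ae_iff] using h.1) (by simpa [ae_iff] using h.2)
  · simp

lemma famC_snd (f : X × Y → ℝ≥0∞) (hf : Measurable f)
    (a : ProbabilityMeasure X × ProbabilityMeasure Y) : (famC f a).map Prod.snd = a.2 := by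
  unfold famC
  split_ifs with h
  · exact resF_snd hf (by simpa [ae_iff] using h.1) (by simpa [ae_iff] using h.2)
  · simp

lemma measurable_famC (f : X × Y → ℝ≥0∞) (hf : Measurable f) : Measurable (famC f) := by
  classical
  let k1 : Kernel (ProbabilityMeasure X × ProbabilityMeasure Y) X :=
    ⟨fun a => a.1, measurable_subtype_coe.comp measurable_fst⟩
  let k2 : Kernel (ProbabilityMeasure X × ProbabilityMeasure Y) Y :=
    ⟨fun a => a.2, measurable_subtype_coe.comp measurable_snd⟩
  have : IsMarkovKernel k1 := ⟨fun a => inferInstanceAs (IsProbabilityMeasure (a.1 : Measure X))⟩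
  have : IsMarkovKernel k2 := ⟨fun a => inferInstanceAs (IsProbabilityMeasure (a.2 : Measure Y))⟩
  have m1 : Measurable fun z : (ProbabilityMeasure X × ProbabilityMeasure Y) × X =>
      ∫⁻ y, f (z.2, y) ∂(k2 z.1) :=
    Measurable.lintegral_kernel_prod_right' (κ := k2.comap Prod.fst measurable_fst)
      (f := fun w : ((ProbabilityMeasure X × ProbabilityMeasure Y) × X) × Y => f (w.1.2, w.2))
      (by fun_prop)
  have m2 : Measurable fun z : (ProbabilityMeasure X × ProbabilityMeasure Y) × Y =>
      ∫⁻ x, f (x, z.2) ∂(k1 z.1) :=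
    Measurable.lintegral_kernel_prod_right' (κ := k1.comap Prod.fst measurable_fst)
      (f := fun w : ((ProbabilityMeasure X × ProbabilityMeasure Y) × Y) × X => f (w.2, w.1.2))
      (by fun_prop)
  have m3 : Measurable fun a : (ProbabilityMeasure X × ProbabilityMeasure Y) =>
      ∫⁻ x, ∫⁻ y, f (x, y) ∂(k2 a) ∂(k1 a) :=
    Measurable.lintegral_kernel_prod_right' (κ := k1) m1
  unfold famC
  refine Measurable.ite ?_ ?_ ProbabilityMeasure.measurable_fun_prod
  · refine MeasurableSet.inter ?_ ?_
    · have := Kernel.measurable_kernel_prodMk_left (κ := k1)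
        (measurableSet_lt measurable_const m1 : MeasurableSet {z | (1 : ℝ≥0∞) < _})
      exact this (measurableSet_singleton 0)
    · have := Kernel.measurable_kernel_prodMk_left (κ := k2)
        (measurableSet_lt measurable_const m2 : MeasurableSet {z | (1 : ℝ≥0∞) < _})
      exact this (measurableSet_singleton 0)
  · have mF : Measurable (Function.uncurry fun (a : ProbabilityMeasure X × ProbabilityMeasure Y) z =>
        resF (a.1 : Measure X) (a.2 : Measure Y) f z) := by
      unfold resF Function.uncurry
      refine Measurable.add (by fun_prop) (Measurable.mul ?_ (Measurable.mul ?_ ?_))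
      · exact ((measurable_const.sub m3).inv).comp measurable_fst
      · exact measurable_const.sub (m1.comp (measurable_fst.prodMk
          (measurable_fst.comp measurable_snd)))
      · exact measurable_const.sub (m2.comp (measurable_fst.prodMk
          (measurable_snd.comp measurable_snd)))
    have := (Kernel.withDensity (k1 ×ₖ k2) (fun a z => resF (a.1 : Measure X) (a.2 : Measure Y) f z)).measurable
    convert this using 2 with a
    rw [Kernel.withDensity_apply _ mF, Kernel.prod_apply]
    rfl

end coupling
lemma nat_density {p q : Measure ℕ} [IsProbabilityMeasure p] [IsProbabilityMeasure q]
    {w : Measure (ℕ × ℕ)} (h1 : w.map Prod.fst = p) (h2 : w.map Prod.snd = q) :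
    ∃ s : ℕ × ℕ → ℝ≥0∞, (∀ z, s z ≠ ∞) ∧ (p.prod q).withDensity s = w ∧
      (∀ᵐ i ∂p, ∫⁻ j, s (i, j) ∂q = 1) ∧ (∀ᵐ j ∂q, ∫⁻ i, s (i, j) ∂p = 1) := by
  have hw1 : ∀ i j, w {(i, j)} ≤ p {i} := fun i j => by
    rw [← h1, Measure.map_apply measurable_fst (measurableSet_singleton i)]
    exact measure_mono (by intro z hz; simp_all)
  have hw2 : ∀ i j, w {(i, j)} ≤ q {j} := fun i j => by
    rw [← h2, Measure.map_apply measurable_snd (measurableSet_singleton j)]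
    exact measure_mono (by intro z hz; simp_all)
  let s : ℕ × ℕ → ℝ≥0∞ := fun z => w {z} / (p {z.1} * q {z.2})
  have hw0 : ∀ z : ℕ × ℕ, p {z.1} * q {z.2} = 0 → w {z} = 0 := by
    rintro ⟨i, j⟩ h
    rcases mul_eq_zero.1 h with h | h
    · exact le_antisymm ((hw1 i j).trans h.le) bot_le
    · exact le_antisymm ((hw2 i j).trans h.le) bot_le
  have hs : ∀ z : ℕ × ℕ, s z * (p {z.1} * q {z.2}) = w {z} := by
    intro z
    by_cases h : p {z.1} * q {z.2} = 0
    · rw [h, hw0 z h, mul_zero]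
    · exact ENNReal.div_mul_cancel h (ENNReal.mul_ne_top (measure_ne_top _ _) (measure_ne_top _ _))
  have hd : (p.prod q).withDensity s = w := by
    refine Measure.ext_of_singleton fun z => ?_
    rw [withDensity_apply _ (measurableSet_singleton z), lintegral_singleton, ← hs z]
    congr 1
    rw [← Prod.eta z, ← Set.singleton_prod_singleton, Measure.prod_prod]
  have hsm : Measurable s := measurable_of_countable s
  refine ⟨s, ?_, hd, ?_, ?_⟩
  · intro z
    by_cases h : p {z.1} * q {z.2} = 0
    · simp [s, hw0 z h]
    · refine ENNReal.div_ne_top ?_ h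
      exact ne_top_of_le_ne_top (measure_ne_top p {z.1}) (hw1 z.1 z.2)
  · rw [ae_iff_of_countable]
    intro i hi
    have h3 : p {i} = (∫⁻ j, s (i, j) ∂q) * p {i} := by
      conv_lhs => rw [← h1, Measure.map_apply measurable_fst (measurableSet_singleton i), ← hd,
        withDensity_apply _ (measurable_fst (measurableSet_singleton i)), ← Set.prod_univ,
        setLIntegral_prod _ hsm.aemeasurable, Measure.restrict_univ, lintegral_singleton]
    have h4 := h3.symm
    rw [← one_mul (p {i}), ← mul_assoc, mul_one] at h4
    exact (ENNReal.mul_left_inj hi (measure_ne_top _ _)).1 h4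
  · rw [ae_iff_of_countable]
    intro j hj
    have h3 : q {j} = (∫⁻ i, s (i, j) ∂p) * q {j} := by
      conv_lhs => rw [← h2, Measure.map_apply measurable_snd (measurableSet_singleton j), ← hd,
        withDensity_apply _ (measurable_snd (measurableSet_singleton j)), ← Set.univ_prod,
        setLIntegral_prod_symm _ hsm.aemeasurable, Measure.restrict_univ, lintegral_singleton]
    have h4 := h3.symm
    rw [← one_mul (q {j}), ← mul_assoc, mul_one] at h4
    exact (ENNReal.mul_left_inj hj (measure_ne_top _ _)).1 h4

lemma finsupp_approx (s : ℕ × ℕ → ℝ≥0∞) (hs : ∀ z, s z ≠ ∞) :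
    ∃ c : ℕ → ((ℕ × ℕ) →₀ ℕ), (∀ N z, (c N z : ℝ≥0∞) / ((N : ℝ≥0∞) + 1) ≤ s z) ∧
      ∀ z, Filter.Tendsto (fun N => (c N z : ℝ≥0∞) / ((N : ℝ≥0∞) + 1)) Filter.atTop
        (nhds (s z)) := by
  classical
  let F : ℕ → ℕ × ℕ → ℕ := fun N z => ⌊(s z).toReal * ((N : ℝ) + 1)⌋₊
  let B : ℕ → Finset (ℕ × ℕ) := fun N => Finset.range N ×ˢ Finset.range N
  let c : ℕ → ((ℕ × ℕ) →₀ ℕ) := fun N =>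
    Finsupp.onFinset (B N) (fun z => if z ∈ B N then F N z else 0) (by
      intro z hz; by_contra h; simp [h] at hz)
  have hc : ∀ N z, c N z = if z ∈ B N then F N z else 0 := fun N z => rfl
  have hconv : ∀ (N : ℕ) (k : ℕ), (k : ℝ≥0∞) / ((N : ℝ≥0∞) + 1)
      = ENNReal.ofReal ((k : ℝ) / ((N : ℝ) + 1)) := by
    intro N k
    rw [ENNReal.ofReal_div_of_pos (by positivity), ENNReal.ofReal_add (by positivity) (by simp)]
    simp
  refine ⟨c, ?_, ?_⟩
  · intro N z
    rw [hc]
    split_ifs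
    · rw [hconv, ← ENNReal.ofReal_toReal (hs z)]
      refine ENNReal.ofReal_le_ofReal ?_
      rw [div_le_iff₀ (by positivity)]
      simp only [F, ENNReal.ofReal_toReal (hs z)]
      exact Nat.floor_le (by positivity)
    · simp
  · intro z
    have h1 : Filter.Tendsto (fun N : ℕ => ((F N z : ℕ) : ℝ) / ((N : ℝ) + 1)) Filter.atTop
        (nhds (s z).toReal) := by
      have := (tendsto_nat_floor_mul_div_atTop (R := ℝ) (a := (s z).toReal) (by positivity)).comp
        (tendsto_natCast_atTop_atTop.comp (Filter.tendsto_add_atTop_nat 1))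
      refine this.congr fun N => ?_
      simp [F]
    have h2 := ENNReal.tendsto_ofReal h1
    rw [ENNReal.ofReal_toReal (hs z)] at h2
    refine h2.congr' ?_
    filter_upwards [Filter.eventually_gt_atTop (max z.1 z.2)] with N hN
    rw [hc, if_pos (by simp [B]; omega), hconv]

section approx
variable {S : Type*} [MetricSpace S] [TopologicalSpace.SeparableSpace S]
    [MeasurableSpace S] [BorelSpace S]

lemma measurable_edist_pow (p : ℝ) : Measurable fun z : S × S => edist z.1 z.2 ^ p := by
  have : SecondCountableTopology S := UniformSpace.secondCountable_of_separable S
  exact (measurable_fst.edist measurable_snd).pow_const p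

/-- step densities -/
noncomputable def stepF (idx : S → ℕ) (N : ℕ) (c : (ℕ × ℕ) →₀ ℕ) (z : S × S) : ℝ≥0∞ :=
  (c (idx z.1, idx z.2) : ℝ≥0∞) / ((N : ℝ≥0∞) + 1)

lemma measurable_stepF {idx : S → ℕ} (hidx : Measurable idx) (N : ℕ) (c : (ℕ × ℕ) →₀ ℕ) :
    Measurable (stepF idx N c) := by
  have h : Measurable fun z : ℕ × ℕ => (c z : ℝ≥0∞) / ((N : ℝ≥0∞) + 1) := measurable_of_countable _
  exact h.comp ((hidx.comp measurable_fst).prodMk (hidx.comp measurable_snd))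

lemma edist_pow_le {p : ℝ} (hp : 1 ≤ p) (x y x0 : S) :
    edist x y ^ p ≤ (2 : ℝ≥0∞) ^ (p - 1) * edist x x0 ^ p + (2 : ℝ≥0∞) ^ (p - 1) * edist y x0 ^ p := by
  rw [← mul_add]
  refine le_trans ?_ (ENNReal.rpow_add_le_mul_rpow_add_rpow _ _ hp)
  refine ENNReal.rpow_le_rpow ?_ (by linarith)
  rw [edist_comm y x0]
  exact edist_triangle x x0 y

lemma rem_tendsto {P : Measure S} {g : ℕ → S → ℝ≥0∞} (hg : ∀ n, Measurable (g n))
    (hlim : ∀ᵐ x ∂P, Filter.Tendsto (fun n => g n x) Filter.atTop (nhds 1))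
    {a : S → ℝ≥0∞} (ha : Measurable a) (hai : ∫⁻ x, a x ∂P ≠ ∞) :
    Filter.Tendsto (fun n => ∫⁻ x, a x * (1 - g n x) ∂P) Filter.atTop (nhds 0) := by
  have h0 : (0 : ℝ≥0∞) = ∫⁻ x, a x * 0 ∂P := by simp
  rw [h0]
  refine tendsto_lintegral_of_dominated_convergence a (fun n => by have := hg n; fun_prop)
    (fun n => Filter.Eventually.of_forall fun x => ?_) hai ?_
  · calc a x * (1 - g n x) ≤ a x * 1 := by gcongr; exact tsub_le_self
      _ = a x := mul_one _
  · filter_upwards [hlim, ae_lt_top ha hai] with x hx hax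
    refine ENNReal.Tendsto.const_mul ?_ (Or.inr hax.ne)
    have := ENNReal.Tendsto.sub (tendsto_const_nhds (x := (1 : ℝ≥0∞))) hx (Or.inl ENNReal.one_ne_top)
    simpa using this

lemma cell_step {p : ℝ} (hp : 1 ≤ p) {idx : S → ℕ} (hidx : Measurable idx) (cen : ℕ → S)
    (e : ℝ≥0∞) (he : ∀ x, edist x (cen (idx x)) ≤ e)
    (P Q : ProbabilityMeasure S) {γ : Measure (S × S)} (h1 : γ.map Prod.fst = P)
    (h2 : γ.map Prod.snd = Q) (x0 : S) (hP : ∫⁻ x, edist x x0 ^ p ∂(P : Measure S) ≠ ∞)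
    (hQ : ∫⁻ x, edist x x0 ^ p ∂(Q : Measure S) ≠ ∞) {ε : ℝ≥0∞} (hε : ε ≠ 0) :
    ∃ N c, ∫⁻ z, edist z.1 z.2 ^ p ∂(famC (stepF idx N c) (P, Q)) ≤
      ∫⁻ z, (edist z.1 z.2 + 4 * e) ^ p ∂γ + ε := by
  have hp0 : 0 ≤ p := by linarith
  have : SecondCountableTopology S := UniformSpace.secondCountable_of_separable S
  have : IsProbabilityMeasure ((P : Measure S).map idx) :=
    Measure.isProbabilityMeasure_map hidx.aemeasurable
  have : IsProbabilityMeasure ((Q : Measure S).map idx) :=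
    Measure.isProbabilityMeasure_map hidx.aemeasurable
  have hii : Measurable (Prod.map idx idx) := hidx.prodMap hidx
  obtain ⟨s, hsfin, hsd, hs1, hs2⟩ := nat_density (p := (P : Measure S).map idx)
    (q := (Q : Measure S).map idx) (w := γ.map (Prod.map idx idx))
    (by rw [Measure.map_map measurable_fst hii, ← h1, Measure.map_map hidx measurable_fst]; rfl)
    (by rw [Measure.map_map measurable_snd hii, ← h2, Measure.map_map hidx measurable_snd]; rfl)
  obtain ⟨c, hc1, hc2⟩ := finsupp_approx s hsfin
  have hsm : Measurable s := measurable_of_countable _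
  have hs1' : ∀ᵐ x ∂(P : Measure S), ∫⁻ y, s (idx x, idx y) ∂(Q : Measure S) = 1 := by
    filter_upwards [ae_of_ae_map hidx.aemeasurable hs1] with x hx
    rwa [lintegral_map (measurable_of_countable _) hidx] at hx
  have hs2' : ∀ᵐ y ∂(Q : Measure S), ∫⁻ x, s (idx x, idx y) ∂(P : Measure S) = 1 := by
    filter_upwards [ae_of_ae_map hidx.aemeasurable hs2] with x hx
    rwa [lintegral_map (measurable_of_countable _) hidx] at hx
  have hfs : ∀ N z, stepF idx N (c N) z ≤ s (idx z.1, idx z.2) := fun N z => hc1 N _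
  have hfm : ∀ N, Measurable (stepF idx N (c N)) := fun N => measurable_stepF hidx N _
  have hsm2 : Measurable fun z : S × S => s (idx z.1, idx z.2) :=
    hsm.comp ((hidx.comp measurable_fst).prodMk (hidx.comp measurable_snd))
  have hg : ∀ N, ∀ᵐ x ∂(P : Measure S), ∫⁻ y, stepF idx N (c N) (x, y) ∂(Q : Measure S) ≤ 1 := by
    intro N
    filter_upwards [hs1'] with x hx
    rw [← hx]
    exact lintegral_mono fun y => hfs N (x, y)
  have hh : ∀ N, ∀ᵐ y ∂(Q : Measure S), ∫⁻ x, stepF idx N (c N) (x, y) ∂(P : Measure S) ≤ 1 := by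
    intro N
    filter_upwards [hs2'] with y hx
    rw [← hx]
    exact lintegral_mono fun x => hfs N (x, y)
  have hgl : ∀ᵐ x ∂(P : Measure S), Filter.Tendsto
      (fun N => ∫⁻ y, stepF idx N (c N) (x, y) ∂(Q : Measure S)) Filter.atTop (nhds 1) := by
    filter_upwards [hs1'] with x hx
    rw [← hx]
    refine tendsto_lintegral_of_dominated_convergence (fun y => s (idx x, idx y))
      (fun N => (hfm N).comp measurable_prodMk_left)
      (fun N => Filter.Eventually.of_forall fun y => hfs N (x, y)) (by rw [hx]; simp)
      (Filter.Eventually.of_forall fun y => hc2 _)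
  have hhl : ∀ᵐ y ∂(Q : Measure S), Filter.Tendsto
      (fun N => ∫⁻ x, stepF idx N (c N) (x, y) ∂(P : Measure S)) Filter.atTop (nhds 1) := by
    filter_upwards [hs2'] with y hx
    rw [← hx]
    refine tendsto_lintegral_of_dominated_convergence (fun x => s (idx x, idx y))
      (fun N => (hfm N).comp measurable_prodMk_right)
      (fun N => Filter.Eventually.of_forall fun x => hfs N (x, y)) (by rw [hx]; simp)
      (Filter.Eventually.of_forall fun y => hc2 _)
  have ham : Measurable fun x : S => (2 : ℝ≥0∞) ^ (p - 1) * edist x x0 ^ p :=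
    ((measurable_id.edist measurable_const).pow_const p).const_mul _
  have h2p : (2 : ℝ≥0∞) ^ (p - 1) ≠ ∞ := ENNReal.rpow_ne_top_of_nonneg (by linarith) (by simp)
  have hR : Filter.Tendsto (fun N =>
      ∫⁻ x, ((2 : ℝ≥0∞) ^ (p - 1) * edist x x0 ^ p) *
        (1 - ∫⁻ y, stepF idx N (c N) (x, y) ∂(Q : Measure S)) ∂(P : Measure S) +
      ∫⁻ y, ((2 : ℝ≥0∞) ^ (p - 1) * edist y x0 ^ p) *
        (1 - ∫⁻ x, stepF idx N (c N) (x, y) ∂(P : Measure S)) ∂(Q : Measure S))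
      Filter.atTop (nhds (0 + 0)) := by
    refine Filter.Tendsto.add (rem_tendsto (fun n => (hfm n).lintegral_prod_right') hgl ham ?_)
      (rem_tendsto (fun n => (hfm n).lintegral_prod_left') hhl ham ?_)
    · rw [lintegral_const_mul' _ _ h2p]; exact ENNReal.mul_ne_top h2p hP
    · rw [lintegral_const_mul' _ _ h2p]; exact ENNReal.mul_ne_top h2p hQ
  rw [add_zero] at hR
  obtain ⟨N, hN⟩ := (hR.eventually (gt_mem_nhds (pos_iff_ne_zero.2 hε))).exists
  refine ⟨N, c N, ?_⟩
  have hfam : famC (stepF idx N (c N)) (P, Q) =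
      ((P : Measure S).prod (Q : Measure S)).withDensity (resF P Q (stepF idx N (c N))) := by
    unfold famC
    rw [if_pos]
    exact ⟨by simpa [ae_iff] using hg N, by simpa [ae_iff] using hh N⟩
  rw [hfam]
  refine (resF_cost (hfm N) (hg N) (hh N) (measurable_edist_pow p) ham ham
    (fun z => edist_pow_le hp z.1 z.2 x0)).trans ?_
  refine add_le_add ?_ hN.le
  have tri : ∀ x y : S, edist x y ≤ edist (cen (idx x)) (cen (idx y)) + 2 * e := fun x y => by
    calc edist x y ≤ edist x (cen (idx x)) + edist (cen (idx x)) (cen (idx y)) +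
          edist (cen (idx y)) y := edist_triangle4 _ _ _ _
      _ ≤ e + edist (cen (idx x)) (cen (idx y)) + e := by
          gcongr
          · exact he x
          · rw [edist_comm]; exact he y
      _ = _ := by ring
  have tri' : ∀ x y : S, edist (cen (idx x)) (cen (idx y)) + 2 * e ≤ edist x y + 4 * e := fun x y => by
    calc edist (cen (idx x)) (cen (idx y)) + 2 * e ≤
          edist (cen (idx x)) x + edist x y + edist y (cen (idx y)) + 2 * e := by
            gcongr; exact edist_triangle4 _ _ _ _
      _ ≤ e + edist x y + e + 2 * e := by
          gcongr
          · rw [edist_comm]; exact he x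
          · exact he y
      _ = _ := by ring
  have hDm : Measurable fun z : ℕ × ℕ => (edist (cen z.1) (cen z.2) + 2 * e) ^ p :=
    measurable_of_countable _
  calc ∫⁻ z, stepF idx N (c N) z * edist z.1 z.2 ^ p ∂((P : Measure S).prod (Q : Measure S))
      ≤ ∫⁻ z, s (Prod.map idx idx z) * (edist (cen (Prod.map idx idx z).1)
          (cen (Prod.map idx idx z).2) + 2 * e) ^ p ∂((P : Measure S).prod (Q : Measure S)) := by
        refine lintegral_mono fun z => mul_le_mul' (hfs N z) (ENNReal.rpow_le_rpow (tri _ _) hp0)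
    _ = ∫⁻ w, s w * (edist (cen w.1) (cen w.2) + 2 * e) ^ p
          ∂(((P : Measure S).map idx).prod ((Q : Measure S).map idx)) := by
        have hm : Measurable fun w : ℕ × ℕ => s w * (edist (cen w.1) (cen w.2) + 2 * e) ^ p :=
          hsm.mul hDm
        rw [Measure.map_prod_map _ _ hidx hidx, lintegral_map hm hii]
    _ = ∫⁻ w, (edist (cen w.1) (cen w.2) + 2 * e) ^ p ∂(γ.map (Prod.map idx idx)) := by
        rw [← hsd, lintegral_withDensity_eq_lintegral_mul _ hsm hDm]; rfl
    _ = ∫⁻ z, (edist (cen (idx z.1)) (cen (idx z.2)) + 2 * e) ^ p ∂γ := by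
        rw [lintegral_map hDm hii]; rfl
    _ ≤ _ := lintegral_mono fun z => ENNReal.rpow_le_rpow (tri' _ _) hp0

lemma exists_cell [Nonempty S] (l : ℕ) (x : S) :
    ∃ k, edist x (TopologicalSpace.denseSeq S k) < ((l : ℝ≥0∞) + 1)⁻¹ := by
  have h := TopologicalSpace.denseRange_denseSeq S
  have hpos : (0 : ℝ≥0∞) < ((l : ℝ≥0∞) + 1)⁻¹ := by simp
  obtain ⟨k, hk⟩ := h.exists_mem_open (Metric.isOpen_eball (x := x) (ε := ((l : ℝ≥0∞) + 1)⁻¹))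
    ⟨x, Metric.mem_eball_self hpos⟩
  exact ⟨k, by rw [edist_comm]; exact hk⟩

open Classical in
/-- index of the cell -/
noncomputable def cellIdx [Nonempty S] (l : ℕ) (x : S) : ℕ := Nat.find (exists_cell l x)

lemma cellIdx_spec [Nonempty S] (l : ℕ) (x : S) :
    edist x (TopologicalSpace.denseSeq S (cellIdx l x)) ≤ ((l : ℝ≥0∞) + 1)⁻¹ := by
  classical
  exact (Nat.find_spec (exists_cell l x)).le

lemma measurable_cellIdx [Nonempty S] (l : ℕ) : Measurable (cellIdx (S := S) l) := by
  classical
  have : SecondCountableTopology S := UniformSpace.secondCountable_of_separable S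
  exact measurable_find _ fun k => measurableSet_lt (measurable_id.edist measurable_const)
    measurable_const

/-- enumeration of indices -/
noncomputable def enumI : ℕ → ℕ × ℕ × ((ℕ × ℕ) →₀ ℕ) :=
  Classical.choose (exists_surjective_nat (ℕ × ℕ × ((ℕ × ℕ) →₀ ℕ)))

lemma enumI_surj : Function.Surjective enumI :=
  Classical.choose_spec (exists_surjective_nat (ℕ × ℕ × ((ℕ × ℕ) →₀ ℕ)))

/-- countable family of couplings -/
noncomputable def couK [Nonempty S] (k : ℕ) (a : ProbabilityMeasure S × ProbabilityMeasure S) :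
    Measure (S × S) :=
  famC (stepF (cellIdx (enumI k).1) (enumI k).2.1 (enumI k).2.2) a

lemma measurable_couK [Nonempty S] (k : ℕ) : Measurable (couK (S := S) k) :=
  measurable_famC _ (measurable_stepF (measurable_cellIdx _) _ _)

lemma couK_fst [Nonempty S] (k : ℕ) (a : ProbabilityMeasure S × ProbabilityMeasure S) :
    (couK k a).map Prod.fst = a.1 :=
  famC_fst _ (measurable_stepF (measurable_cellIdx _) _ _) a

lemma couK_snd [Nonempty S] (k : ℕ) (a : ProbabilityMeasure S × ProbabilityMeasure S) :
    (couK k a).map Prod.snd = a.2 :=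
  famC_snd _ (measurable_stepF (measurable_cellIdx _) _ _) a

/-- measurable version of the `p`-th power of the Wasserstein distance -/
noncomputable def VV [Nonempty S] (p : ℝ) (a : ProbabilityMeasure S × ProbabilityMeasure S) :
    ℝ≥0∞ := ⨅ k, ∫⁻ z, edist z.1 z.2 ^ p ∂(couK k a)

lemma measurable_cost_couK [Nonempty S] (p : ℝ) (k : ℕ) :
    Measurable fun a : ProbabilityMeasure S × ProbabilityMeasure S =>
      ∫⁻ z, edist z.1 z.2 ^ p ∂(couK k a) :=
  (Measure.measurable_lintegral (measurable_edist_pow p)).comp (measurable_couK k)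

lemma measurable_VV [Nonempty S] (p : ℝ) : Measurable (VV (S := S) p) :=
  Measurable.iInf fun k => measurable_cost_couK p k

lemma exists_sel [Nonempty S] (p : ℝ) {δ : ℝ≥0∞} (hδ : δ ≠ 0) :
    ∃ G : ProbabilityMeasure S × ProbabilityMeasure S → Measure (S × S), Measurable G ∧
      ∀ a, (G a).map Prod.fst = a.1 ∧ (G a).map Prod.snd = a.2 ∧
        ∫⁻ z, edist z.1 z.2 ^ p ∂(G a) ≤ VV p a + δ := by
  classical
  have hex : ∀ a : ProbabilityMeasure S × ProbabilityMeasure S,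
      ∃ k, ∫⁻ z, edist z.1 z.2 ^ p ∂(couK k a) ≤ VV p a + δ := by
    intro a
    by_cases h : VV p a = ∞
    · exact ⟨0, by simp [h]⟩
    · obtain ⟨k, hk⟩ := iInf_lt_iff.1 (ENNReal.lt_add_right h hδ)
      exact ⟨k, hk.le⟩
  refine ⟨fun a => couK (Nat.find (hex a)) a, ?_, fun a => ⟨couK_fst _ _, couK_snd _ _,
    Nat.find_spec (hex a)⟩⟩
  exact Measurable.find (fun k => measurable_couK k)
    (fun k => measurableSet_le (measurable_cost_couK p k) ((measurable_VV p).add_const _)) hex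

lemma coupling_moment {p : ℝ} (hp : 1 ≤ p) {P Q : Measure S} {γ : Measure (S × S)}
    (h1 : γ.map Prod.fst = P) (h2 : γ.map Prod.snd = Q) (x0 : S)
    (hP : ∫⁻ x, edist x x0 ^ p ∂P ≠ ∞) (hQ : ∫⁻ x, edist x x0 ^ p ∂Q ≠ ∞) :
    ∫⁻ z, edist z.1 z.2 ^ p ∂γ ≠ ∞ := by
  have : SecondCountableTopology S := UniformSpace.secondCountable_of_separable S
  have h2p : (2 : ℝ≥0∞) ^ (p - 1) ≠ ∞ := ENNReal.rpow_ne_top_of_nonneg (by linarith) (by simp)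
  have ham : Measurable fun x : S => edist x x0 ^ p :=
    (measurable_id.edist measurable_const).pow_const p
  refine ne_top_of_le_ne_top ?_ (lintegral_mono fun z => edist_pow_le hp z.1 z.2 x0)
  have m1 : Measurable fun z : S × S => 2 ^ (p - 1) * edist z.1 x0 ^ p :=
    (ham.comp measurable_fst).const_mul _
  rw [lintegral_add_left m1, lintegral_const_mul' _ _ h2p, lintegral_const_mul' _ _ h2p]
  rw [← h1, lintegral_map ham measurable_fst] at hP
  rw [← h2, lintegral_map ham measurable_snd] at hQ
  exact ENNReal.add_ne_top.2 ⟨ENNReal.mul_ne_top h2p hP, ENNReal.mul_ne_top h2p hQ⟩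

lemma VV_le [Nonempty S] {p : ℝ} (hp : 1 ≤ p) (P Q : ProbabilityMeasure S) {γ : Measure (S × S)}
    (h1 : γ.map Prod.fst = P) (h2 : γ.map Prod.snd = Q) (x0 : S)
    (hP : ∫⁻ x, edist x x0 ^ p ∂(P : Measure S) ≠ ∞)
    (hQ : ∫⁻ x, edist x x0 ^ p ∂(Q : Measure S) ≠ ∞) :
    VV p (P, Q) ≤ ∫⁻ z, edist z.1 z.2 ^ p ∂γ := by
  have hp0 : 0 ≤ p := by linarith
  have : SecondCountableTopology S := UniformSpace.secondCountable_of_separable S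
  have : IsProbabilityMeasure γ := by
    constructor
    have : γ.map Prod.fst Set.univ = 1 := by rw [h1]; simp
    rwa [Measure.map_apply measurable_fst MeasurableSet.univ, Set.preimage_univ] at this
  have hstep : ∀ l : ℕ, VV p (P, Q) ≤
      ∫⁻ z, (edist z.1 z.2 + 4 * ((l : ℝ≥0∞) + 1)⁻¹) ^ p ∂γ := by
    intro l
    refine ENNReal.le_of_forall_pos_le_add fun ε hε _ => ?_
    obtain ⟨N, c, h⟩ := cell_step hp (measurable_cellIdx l) (TopologicalSpace.denseSeq S) _
      (cellIdx_spec l) P Q h1 h2 x0 hP hQ (ε := ε) (by simpa using hε.ne')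
    obtain ⟨k, hk⟩ := enumI_surj (l, N, c)
    refine le_trans (iInf_le _ k) ?_
    unfold couK
    rw [hk]
    exact h
  have hd : Measurable fun z : S × S => edist z.1 z.2 := measurable_fst.edist measurable_snd
  have h0 : Filter.Tendsto (fun l : ℕ => 4 * ((l : ℝ≥0∞) + 1)⁻¹) Filter.atTop (nhds 0) := by
    have := ENNReal.Tendsto.const_mul (a := 4)
      ((Filter.tendsto_add_atTop_iff_nat 1).2 ENNReal.tendsto_inv_nat_nhds_zero) (Or.inr (by simp))
    simpa using this
  refine ge_of_tendsto' (x := Filter.atTop) ?_ hstep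
  refine tendsto_lintegral_of_dominated_convergence (fun z => (edist z.1 z.2 + 4) ^ p)
    (fun l => (hd.add_const _).pow_const p) (fun l => Filter.Eventually.of_forall fun z => ?_) ?_ ?_
  · refine ENNReal.rpow_le_rpow (add_le_add le_rfl ?_) hp0
    calc 4 * ((l : ℝ≥0∞) + 1)⁻¹ ≤ 4 * 1 := by
          gcongr
          rw [ENNReal.inv_le_one]
          simp
      _ = 4 := mul_one _
  · have h2p : (2 : ℝ≥0∞) ^ (p - 1) ≠ ∞ := ENNReal.rpow_ne_top_of_nonneg (by linarith) (by simp)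
    refine ne_top_of_le_ne_top ?_ (lintegral_mono fun z =>
      ENNReal.rpow_add_le_mul_rpow_add_rpow (edist z.1 z.2) 4 hp)
    rw [lintegral_const_mul' _ _ h2p, lintegral_add_right _ measurable_const]
    refine ENNReal.mul_ne_top h2p (ENNReal.add_ne_top.2 ⟨coupling_moment hp h1 h2 x0 hP hQ, ?_⟩)
    simp [hp0]
  · refine Filter.Eventually.of_forall fun z => ?_
    have := (ENNReal.continuous_rpow_const (y := p)).tendsto (edist z.1 z.2 + 0)
    have h3 := this.comp (h0.const_add (edist z.1 z.2))
    rw [add_zero] at h3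
    exact h3

lemma memWp_lintegral {p : ℝ} (hp : 1 ≤ p) {P : Measure S} (hP : MemWp p P) (x0 : S) :
    ∫⁻ x, edist x x0 ^ p ∂P ≠ ∞ := by
  have hp0 : 0 ≤ p := by linarith
  have := hP.1
  obtain ⟨x1, hx1⟩ := hP.2
  have h2p : (2 : ℝ≥0∞) ^ (p - 1) ≠ ∞ := ENNReal.rpow_ne_top_of_nonneg (by linarith) (by simp)
  have hf : ∫⁻ x, edist x x1 ^ p ∂P ≠ ∞ := by
    have h3 := hx1.lintegral_lt_top.ne
    convert h3 using 3 with x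
    rw [edist_dist, ENNReal.ofReal_rpow_of_nonneg dist_nonneg hp0]
  refine ne_top_of_le_ne_top ?_ (lintegral_mono fun x => edist_pow_le hp x x0 x1)
  rw [lintegral_add_right _ measurable_const, lintegral_const_mul' _ _ h2p]
  refine ENNReal.add_ne_top.2 ⟨ENNReal.mul_ne_top h2p hf, ?_⟩
  simp only [lintegral_const, measure_univ, mul_one]
  exact ENNReal.mul_ne_top h2p (ENNReal.rpow_ne_top_of_nonneg hp0 (edist_ne_top _ _))

lemma VV_le_wassW [Nonempty S] {p : ℝ} (hp : 1 ≤ p) (P Q : ProbabilityMeasure S)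
    (hP : MemWp p (P : Measure S)) (hQ : MemWp p (Q : Measure S)) :
    VV p (P, Q) ^ (1 / p) ≤ ENNReal.ofReal (wassW (fun u v => dist u v) p (P : Measure S) (Q : Measure S)) := by
  have hp0 : 0 < p := by linarith
  have : SecondCountableTopology S := UniformSpace.secondCountable_of_separable S
  obtain ⟨x0⟩ := ‹Nonempty S›
  have hP' := memWp_lintegral hp hP x0
  have hQ' := memWp_lintegral hp hQ x0
  have hfin : VV p (P, Q) ≠ ∞ :=
    ne_top_of_le_ne_top (coupling_moment hp (couK_fst 0 (P, Q)) (couK_snd 0 (P, Q)) x0 hP' hQ')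
      (iInf_le _ 0)
  rw [← ENNReal.ofReal_toReal (ENNReal.rpow_ne_top_of_nonneg (by positivity) hfin)]
  refine ENNReal.ofReal_le_ofReal ?_
  refine le_csInf ⟨_, couK 0 (P, Q), couK_fst 0 (P, Q), couK_snd 0 (P, Q), rfl⟩ ?_
  rintro r ⟨γ, h1, h2, rfl⟩
  have hle := VV_le hp P Q h1 h2 x0 hP' hQ'
  have hγ := coupling_moment hp h1 h2 x0 hP' hQ'
  rw [← ENNReal.toReal_rpow]
  refine Real.rpow_le_rpow ENNReal.toReal_nonneg ?_ (by positivity)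
  rw [integral_eq_lintegral_of_nonneg_ae (Filter.Eventually.of_forall fun z => by positivity)
    ((measurable_fst.dist measurable_snd).pow_const p).aestronglyMeasurable]
  have hc : ∫⁻ z : S × S, ENNReal.ofReal (dist z.1 z.2 ^ p) ∂γ = ∫⁻ z, edist z.1 z.2 ^ p ∂γ := by
    refine lintegral_congr fun z => ?_
    rw [edist_dist, ENNReal.ofReal_rpow_of_nonneg dist_nonneg hp0.le]
  rw [hc]
  exact ENNReal.toReal_mono hγ hle

end approx


section direct

lemma measurable_infinitePi_kernel {A X : Type*} [MeasurableSpace A] [MeasurableSpace X]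
    (k : Kernel A X) [IsMarkovKernel k] :
    Measurable fun a => Measure.infinitePi fun _ : ℕ => k a := by
  refine Measurable.measure_of_isPiSystem_of_isProbabilityMeasure
    (S := squareCylinders fun _ : ℕ => {s : Set X | MeasurableSet s})
    generateFrom_squareCylinders.symm
    (isPiSystem_squareCylinders (fun _ => MeasurableSpace.isPiSystem_measurableSet) (by simp)) ?_
  rintro s ⟨I, t, ht, rfl⟩
  have ht' : ∀ i, MeasurableSet (t i) := by simpa using ht
  simp_rw [Measure.infinitePi_pi _ (fun i _ => ht' i)]
  exact Finset.measurable_prod _ fun i _ => k.measurable_coe (ht' i)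

/-- infinite product kernel -/
noncomputable def ipiK {A X : Type*} [MeasurableSpace A] [MeasurableSpace X]
    (k : Kernel A X) [IsMarkovKernel k] : Kernel A (ℕ → X) :=
  ⟨fun a => Measure.infinitePi fun _ : ℕ => k a, measurable_infinitePi_kernel k⟩

instance {A X : Type*} [MeasurableSpace A] [MeasurableSpace X]
    (k : Kernel A X) [IsMarkovKernel k] : IsMarkovKernel (ipiK k) :=
  ⟨fun a => inferInstanceAs (IsProbabilityMeasure (Measure.infinitePi fun _ : ℕ => k a))⟩

/-- the evaluation kernel -/
noncomputable def pmK (X : Type*) [MeasurableSpace X] : Kernel (ProbabilityMeasure X) X :=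
  ⟨fun P => P, measurable_subtype_coe⟩

instance {X : Type*} [MeasurableSpace X] : IsMarkovKernel (pmK X) :=
  ⟨fun a => inferInstanceAs (IsProbabilityMeasure (a : Measure X))⟩

variable {S : Type*} [MeasurableSpace S]

lemma iid_eq (iid : Measure S → Measure (ℕ → S))
    (hiid : ∀ 𝔭 : Measure S, IsProbabilityMeasure 𝔭 →
      IsProbabilityMeasure (iid 𝔭) ∧
        ∀ (n : ℕ) (A : Fin n → Set S), (∀ i, MeasurableSet (A i)) →
          iid 𝔭 {ω | ∀ i : Fin n, ω (i : ℕ) ∈ A i} = ∏ i, 𝔭 (A i))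
    (P : ProbabilityMeasure S) : iid P = ipiK (pmK S) P := by
  classical
  refine Measure.eq_infinitePi (μ := fun _ : ℕ => (P : Measure S)) ?_
  intro s t ht
  obtain ⟨n, hn⟩ := s.exists_nat_subset_range
  have h := (hiid P inferInstance).2 n (fun i => if (i : ℕ) ∈ s then t i else Set.univ)
    (fun i => by split_ifs; exacts [ht _, MeasurableSet.univ])
  have e1 : {ω : ℕ → S | ∀ i : Fin n, ω (i : ℕ) ∈ (if (i : ℕ) ∈ s then t i else Set.univ)} =
      Set.pi s t := by
    ext ω
    simp only [Set.mem_ofPred_eq, Set.mem_pi, Finset.mem_coe]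
    constructor
    · intro h i hi
      have := h ⟨i, Finset.mem_range.1 (hn hi)⟩
      simpa [hi] using this
    · intro h i
      split_ifs with hi
      · exact h _ hi
      · trivial
  rw [e1] at h
  rw [h, Fin.prod_univ_eq_prod_range (fun i => (P : Measure S) (if i ∈ s then t i else Set.univ)) n,
    ← Finset.prod_subset hn]
  · exact Finset.prod_congr rfl fun i hi => by simp [hi]
  · intro i _ hi
    simp [hi]

lemma exists_retract [Nonempty S] : ∃ R : Measure S → ProbabilityMeasure S, Measurable R ∧
    ∀ μ : Measure S, IsProbabilityMeasure μ → (R μ : Measure S) = μ := by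
  classical
  obtain ⟨s0⟩ := ‹Nonempty S›
  let R : Measure S → ProbabilityMeasure S := fun μ =>
    if h : IsProbabilityMeasure μ then ⟨μ, h⟩ else ⟨Measure.dirac s0, inferInstance⟩
  have hR : ∀ μ, (R μ : Measure S) = if IsProbabilityMeasure μ then μ else Measure.dirac s0 := by
    intro μ
    by_cases h : IsProbabilityMeasure μ <;> simp [R, h]
  refine ⟨R, ?_, fun μ h => by rw [hR, if_pos h]⟩
  have : Measurable fun μ => (R μ : Measure S) := by
    simp_rw [hR]
    exact Measurable.ite (ProbabilityMeasure.measurableSet_isProbabilityMeasure) measurable_id measurable_const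
  exact this.subtype_mk

lemma direct_compProd (iid : Measure S → Measure (ℕ → S))
    (hiid : ∀ P : ProbabilityMeasure S, iid P = ipiK (pmK S) P)
    (ρ : Measure (ℕ → S)) [IsProbabilityMeasure ρ]
    (ptilde : (ℕ → S) → Measure S)
    (hdirect : ∀ C : Set (ℕ → S), MeasurableSet C → ∀ B : Set (Measure S), MeasurableSet B →
      ρ (C ∩ ptilde ⁻¹' B) = ∫⁻ ω in ptilde ⁻¹' B, iid (ptilde ω) C ∂ρ)
    (pt : (ℕ → S) → ProbabilityMeasure S) (hpt : Measurable pt)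
    (hpte : ∀ᵐ ω ∂ρ, (pt ω : Measure S) = ptilde ω) :
    ρ.map (fun ω => (pt ω, ω)) = (ρ.map pt) ⊗ₘ (ipiK (pmK S)) := by
  have hpm : Measurable fun ω => (pt ω, ω) := hpt.prodMk measurable_id
  have := Measure.isProbabilityMeasure_map (μ := ρ) hpt.aemeasurable
  have := Measure.isProbabilityMeasure_map (μ := ρ) hpm.aemeasurable
  refine Measure.ext_prod fun {A C} hA hC => ?_
  rw [Measure.map_apply hpm (hA.prod hC),
    Measure.compProd_apply_prod hA hC, setLIntegral_map hA (Kernel.measurable_coe _ hC) hpt]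
  have hB : MeasurableSet ((fun P : ProbabilityMeasure S => (P : Measure S)) '' A) :=
    (MeasurableEmbedding.subtype_coe ProbabilityMeasure.measurableSet_isProbabilityMeasure).measurableSet_image.2 hA
  have h := hdirect C hC _ hB
  have hae : ptilde ⁻¹' ((fun P : ProbabilityMeasure S => (P : Measure S)) '' A) =ᵐ[ρ] pt ⁻¹' A := by
    filter_upwards [hpte] with ω hω
    refine propext ⟨?_, fun h => ⟨pt ω, h, hω⟩⟩
    rintro ⟨P, hP, hPe⟩
    have : P = pt ω := Subtype.ext (hPe.trans hω.symm)
    show pt ω ∈ A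
    rwa [← this]
  rw [setLIntegral_congr hae] at h
  have e1 : (fun ω => (pt ω, ω)) ⁻¹' (A ×ˢ C) = C ∩ pt ⁻¹' A := by
    ext ω; simp [and_comm]
  rw [e1, ← measure_congr ((ae_eq_refl C).inter hae), h]
  refine lintegral_congr_ae (ae_restrict_of_ae ?_)
  filter_upwards [hpte] with ω hω
  rw [← hω, hiid]

lemma direct_lintegral {ρ : Measure (ℕ → S)} [IsProbabilityMeasure ρ]
    {pt : (ℕ → S) → ProbabilityMeasure S} (hpt : Measurable pt)
    (hd : ρ.map (fun ω => (pt ω, ω)) = (ρ.map pt) ⊗ₘ (ipiK (pmK S)))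
    {F : ProbabilityMeasure S × (ℕ → S) → ℝ≥0∞} (hF : Measurable F) :
    ∫⁻ ω, F (pt ω, ω) ∂ρ = ∫⁻ ω, ∫⁻ ω', F (pt ω, ω') ∂(ipiK (pmK S) (pt ω)) ∂ρ := by
  have hpm : Measurable fun ω => (pt ω, ω) := hpt.prodMk measurable_id
  have := Measure.isProbabilityMeasure_map (μ := ρ) hpt.aemeasurable
  have h : Measurable fun P : ProbabilityMeasure S => ∫⁻ ω', F (P, ω') ∂(ipiK (pmK S) P) :=
    hF.lintegral_kernel_prod_right'
  rw [← lintegral_map hF hpm, hd, Measure.lintegral_compProd hF,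
    lintegral_map h hpt]

lemma ae_of_direct {ρ : Measure (ℕ → S)} [IsProbabilityMeasure ρ]
    {pt : (ℕ → S) → ProbabilityMeasure S} (hpt : Measurable pt)
    (hd : ρ.map (fun ω => (pt ω, ω)) = (ρ.map pt) ⊗ₘ (ipiK (pmK S)))
    {L : ProbabilityMeasure S × (ℕ → S) → ℝ≥0∞} (hL : Measurable L) (y : (ℕ → S) → ℝ≥0∞)
    (h : ∀ᵐ ω ∂ρ, ∀ᵐ ω' ∂(ipiK (pmK S) (pt ω)), L (pt ω, ω') ≤ y ω) :
    ∀ᵐ ω ∂ρ, L (pt ω, ω) ≤ y ω := by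
  have hpm : Measurable fun ω => (pt ω, ω) := hpt.prodMk measurable_id
  have := Measure.isProbabilityMeasure_map (μ := ρ) hpt.aemeasurable
  have key : ∀ q : ℚ, ∀ᵐ ω ∂ρ, ipiK (pmK S) (pt ω) {ω' | ENNReal.ofReal q < L (pt ω, ω')} = 0 →
      L (pt ω, ω) ≤ ENNReal.ofReal q := by
    intro q
    have hm : MeasurableSet {z : ProbabilityMeasure S × (ℕ → S) | ENNReal.ofReal q < L z} :=
      measurableSet_lt measurable_const hL
    have hN : MeasurableSet {P : ProbabilityMeasure S |
        ipiK (pmK S) P {ω' | ENNReal.ofReal q < L (P, ω')} = 0} :=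
      (Kernel.measurable_kernel_prodMk_left (κ := ipiK (pmK S)) hm) (measurableSet_singleton 0)
    have hW : MeasurableSet {z : ProbabilityMeasure S × (ℕ → S) |
        ipiK (pmK S) z.1 {ω' | ENNReal.ofReal q < L (z.1, ω')} = 0 ∧ ENNReal.ofReal q < L z} :=
      (measurable_fst hN).inter hm
    have h0 : (ρ.map (fun ω => (pt ω, ω))) {z : ProbabilityMeasure S × (ℕ → S) |
        ipiK (pmK S) z.1 {ω' | ENNReal.ofReal q < L (z.1, ω')} = 0 ∧ ENNReal.ofReal q < L z} = 0 := by
      rw [hd, Measure.compProd_apply hW, lintegral_eq_zero_iff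
        (Kernel.measurable_kernel_prodMk_left hW)]
      refine Filter.Eventually.of_forall fun P => ?_
      by_cases hP : ipiK (pmK S) P {ω' | ENNReal.ofReal q < L (P, ω')} = 0
      · exact measure_mono_null (fun ω' hω' => hω'.2) hP
      · simp [hP]
    rw [Measure.map_apply hpm hW] at h0
    rw [ae_iff]
    convert h0 using 2
    ext ω
    simp
  filter_upwards [ae_all_iff.2 key, h] with ω h1 h2
  by_contra hcon
  push Not at hcon
  obtain ⟨q, hq0, hq1, hq2⟩ := ENNReal.lt_iff_exists_rat_btwn.1 hcon
  refine absurd (h1 q ?_) (not_le.2 hq2)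
  refine measure_mono_null ?_ h2
  intro ω' hω' hle
  exact absurd (hle.trans_lt hq1) (not_lt.2 (le_of_lt hω'))

end direct


section perN

lemma ofReal_integral_le {X : Type*} [MeasurableSpace X] (γ : Measure X) (f : X → ℝ)
    (hf : ∀ x, 0 ≤ f x) : ENNReal.ofReal (∫ x, f x ∂γ) ≤ ∫⁻ x, ENNReal.ofReal (f x) ∂γ := by
  by_cases h : Integrable f γ
  · exact (ofReal_integral_eq_lintegral_ofReal h (Filter.Eventually.of_forall hf)).le
  · simp [integral_undef h]

lemma wassW_nonneg {X : Type*} [MeasurableSpace X] (c : X → X → ℝ) (hc : ∀ x y, 0 ≤ c x y)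
    (p : ℝ) (μ ν : Measure X) : 0 ≤ wassW c p μ ν := by
  refine Real.sInf_nonneg ?_
  rintro r ⟨γ, -, -, rfl⟩
  exact Real.rpow_nonneg (integral_nonneg fun z => Real.rpow_nonneg (hc _ _) _) _

lemma wassW_pow_le {X : Type*} [MeasurableSpace X] (c : X → X → ℝ) (hc : ∀ x y, 0 ≤ c x y)
    {p : ℝ} (hp : 1 ≤ p) {μ ν : Measure X} (γ : Measure (X × X)) (h1 : γ.map Prod.fst = μ)
    (h2 : γ.map Prod.snd = ν) :
    ENNReal.ofReal (wassW c p μ ν) ^ p ≤ ∫⁻ z, ENNReal.ofReal (c z.1 z.2) ^ p ∂γ := by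
  have hp0 : 0 < p := by linarith
  have hi : 0 ≤ ∫ z, c z.1 z.2 ^ p ∂γ := integral_nonneg fun z => Real.rpow_nonneg (hc _ _) _
  have hle : wassW c p μ ν ≤ (∫ z, c z.1 z.2 ^ p ∂γ) ^ (1 / p) := by
    refine csInf_le ⟨0, ?_⟩ ⟨γ, h1, h2, rfl⟩
    rintro r ⟨γ, -, -, rfl⟩
    exact Real.rpow_nonneg (integral_nonneg fun z => Real.rpow_nonneg (hc _ _) _) _
  calc ENNReal.ofReal (wassW c p μ ν) ^ p
      ≤ ENNReal.ofReal ((∫ z, c z.1 z.2 ^ p ∂γ) ^ (1 / p)) ^ p :=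
        ENNReal.rpow_le_rpow (ENNReal.ofReal_le_ofReal hle) hp0.le
    _ = ENNReal.ofReal (∫ z, c z.1 z.2 ^ p ∂γ) := by
        rw [ENNReal.ofReal_rpow_of_nonneg (Real.rpow_nonneg hi _) hp0.le, ← Real.rpow_mul hi,
          one_div_mul_cancel hp0.ne', Real.rpow_one]
    _ ≤ ∫⁻ z, ENNReal.ofReal (c z.1 z.2 ^ p) ∂γ :=
        ofReal_integral_le _ _ fun z => Real.rpow_nonneg (hc _ _) _
    _ = _ := lintegral_congr fun z => (ENNReal.ofReal_rpow_of_nonneg (hc _ _) hp0.le).symm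

lemma measurable_empShift {S : Type*} [MeasurableSpace S] (n m : ℕ) :
    Measurable (empShift (S := S) n m) := by
  refine Measure.measurable_of_measurable_coe _ fun s hs => ?_
  simp only [empShift, Measure.smul_apply, Measure.finsetSum_apply, smul_eq_mul]
  refine Measurable.const_mul (Finset.measurable_sum _ fun i _ => ?_) _
  exact (Measure.measurable_coe hs).comp (Measure.measurable_dirac.comp (measurable_pi_apply _))

lemma empShift_prob {S : Type*} [MeasurableSpace S] (n : ℕ) {m : ℕ} (hm : 1 ≤ m) (ω : ℕ → S) :
    IsProbabilityMeasure (empShift n m ω) := by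
  constructor
  simp only [empShift, Measure.smul_apply, Measure.finsetSum_apply, smul_eq_mul, measure_univ,
    Finset.sum_const, Finset.card_range, nsmul_eq_mul, mul_one]
  exact ENNReal.inv_mul_cancel (by simp; omega) (by simp)

variable {S : Type*} [MetricSpace S] [TopologicalSpace.SeparableSpace S]
    [MeasurableSpace S] [BorelSpace S]

lemma emp_map {X Y : Type*} [MeasurableSpace X] [MeasurableSpace Y] {f : X → Y} (hf : Measurable f)
    (n m : ℕ) (z : ℕ → X) : (empShift n m z).map f = empShift n m (fun i => f (z i)) := by
  ext s hs
  rw [Measure.map_apply hf hs]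
  simp only [empShift, Measure.smul_apply, Measure.finsetSum_apply, smul_eq_mul]
  congr 1
  refine Finset.sum_congr rfl fun i _ => ?_
  rw [Measure.dirac_apply' _ (hf hs), Measure.dirac_apply' _ hs]
  rfl

lemma emp_wass {p : ℝ} (hp : 1 ≤ p) (n m : ℕ) (z : ℕ → S × S) :
    ENNReal.ofReal (wassW (fun u v => dist u v) p (empShift n m (fun i => (z i).1))
      (empShift n m (fun i => (z i).2))) ^ p ≤
    (m : ℝ≥0∞)⁻¹ * ∑ i ∈ Finset.range m, edist (z (i + n)).1 (z (i + n)).2 ^ p := by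
  have : SecondCountableTopology S := UniformSpace.secondCountable_of_separable S
  refine (wassW_pow_le (fun u v : S => dist u v) (fun _ _ => dist_nonneg) hp (empShift n m z)
    (emp_map measurable_fst n m z) (emp_map measurable_snd n m z)).trans (le_of_eq ?_)
  simp only [empShift, lintegral_smul_measure, lintegral_finsetSum_measure, smul_eq_mul,
    lintegral_dirac, edist_dist]

lemma indep_first_emp (k : Measure S) [IsProbabilityMeasure k] (n m : ℕ) :
    IndepFun (firstN (S := S) n) (empShift n m) (Measure.infinitePi fun _ : ℕ => k) := by
  have h : iIndepFun (fun (i : ℕ) (ω : ℕ → S) => ω i) (Measure.infinitePi fun _ : ℕ => k) :=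
    iIndepFun_infinitePi (X := fun _ x => x) (fun _ => measurable_id)
  have h2 := h.indepFun_finset (Finset.range n) (Finset.Ico n (n + m))
    (by rw [Finset.disjoint_left]; intro a; simp; omega) (fun i => measurable_pi_apply i)
  have f1 : Measurable fun (w : Finset.range n → S) (i : Fin n) =>
      w ⟨i, Finset.mem_range.2 i.2⟩ := measurable_pi_lambda _ fun i => measurable_pi_apply _
  have f2 : Measurable fun (w : Finset.Ico n (n + m) → S) =>
      ((m : ℝ≥0∞)⁻¹ • ∑ i : Fin m, Measure.dirac (w ⟨i + n, by simp; omega⟩) : Measure S) := by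
    refine Measure.measurable_of_measurable_coe _ fun s hs => ?_
    simp only [Measure.smul_apply, Measure.finsetSum_apply, smul_eq_mul]
    refine Measurable.const_mul (Finset.measurable_sum _ fun i _ => ?_) _
    exact (Measure.measurable_coe hs).comp (Measure.measurable_dirac.comp (measurable_pi_apply _))
  have h3 := h2.comp f1 f2
  have e2 : empShift (S := S) n m = (fun (w : Finset.Ico n (n + m) → S) =>
      ((m : ℝ≥0∞)⁻¹ • ∑ i : Fin m, Measure.dirac (w ⟨i + n, by simp; omega⟩) : Measure S)) ∘
      fun ω i => ω i := by
    funext ω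
    simp only [empShift, Function.comp]
    rw [Finset.sum_range]
  rw [e2]
  exact h3

lemma countablyGenerated_PM : MeasurableSpace.CountablyGenerated (ProbabilityMeasure S) := by
  have : SecondCountableTopology S := UniformSpace.secondCountable_of_separable S
  let 𝒜 := generateSetAlgebra (MeasurableSpace.countableGeneratingSet S)
  have hcount : 𝒜.Countable :=
    countable_generateSetAlgebra MeasurableSpace.countable_countableGeneratingSet
  have hgen : ‹MeasurableSpace S› = MeasurableSpace.generateFrom 𝒜 := by
    rw [generateFrom_generateSetAlgebra_eq, MeasurableSpace.generateFrom_countableGeneratingSet]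
  have hpi : IsPiSystem 𝒜 := fun s hs t ht _ => isSetAlgebra_generateSetAlgebra.inter_mem hs ht
  have hmeas : ∀ A ∈ 𝒜, MeasurableSet A := fun A hA => by
    rw [hgen]; exact MeasurableSpace.measurableSet_generateFrom hA
  have : Countable 𝒜 := hcount.to_subtype
  let ev : ProbabilityMeasure S → (𝒜 → ℝ≥0∞) := fun P A => (P : Measure S) A
  have hev : Measurable ev := measurable_pi_lambda _ fun A =>
    (Measure.measurable_coe (hmeas A A.2)).comp measurable_subtype_coe
  have heq : (inferInstance : MeasurableSpace (ProbabilityMeasure S)) =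
      MeasurableSpace.comap ev inferInstance := by
    refine le_antisymm ?_ hev.comap_le
    have h1 : @Measurable (ProbabilityMeasure S) (Measure S) (MeasurableSpace.comap ev inferInstance) _
        (fun P => (P : Measure S)) := by
      let _ : MeasurableSpace (ProbabilityMeasure S) := MeasurableSpace.comap ev inferInstance
      refine Measurable.measure_of_isPiSystem_of_isProbabilityMeasure hgen hpi ?_
      intro A hA
      have h2 : Measurable ev := comap_measurable ev
      exact (measurable_pi_apply (⟨A, hA⟩ : 𝒜)).comp h2
    exact measurable_iff_comap_le.1 h1
  have h : @MeasurableSpace.CountablyGenerated _ (MeasurableSpace.comap ev inferInstance) :=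
    MeasurableSpace.CountablyGenerated.comap ev
  rw [← heq] at h
  exact h

/-- law of the empirical measure given the directing measure -/
noncomputable def empKer (n m : ℕ) (pt : (ℕ → S) → ProbabilityMeasure S) (hpt : Measurable pt) :
    Kernel (ℕ → S) (Measure S) := ((ipiK (pmK S)).comap pt hpt).map (empShift n m)

instance (n m : ℕ) (pt : (ℕ → S) → ProbabilityMeasure S) (hpt : Measurable pt) :
    IsMarkovKernel (empKer n m pt hpt) := Kernel.IsMarkovKernel.map _ (measurable_empShift n m)

lemma empKer_apply (n m : ℕ) (pt : (ℕ → S) → ProbabilityMeasure S) (hpt : Measurable pt)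
    (ω : ℕ → S) {B : Set (Measure S)} (hB : MeasurableSet B) :
    empKer n m pt hpt ω B = ipiK (pmK S) (pt ω) (empShift n m ⁻¹' B) := by
  rw [empKer, Kernel.map_apply _ (measurable_empShift n m),
    Measure.map_apply (measurable_empShift n m) hB]
  rfl

lemma compProd_post {ρ : Measure (ℕ → S)} [IsProbabilityMeasure ρ]
    {pt : (ℕ → S) → ProbabilityMeasure S} (hpt : Measurable pt)
    (hd : ρ.map (fun ω => (pt ω, ω)) = (ρ.map pt) ⊗ₘ (ipiK (pmK S)))
    {n : ℕ} (Q : Kernel (Fin n → S) (ℕ → S)) [IsMarkovKernel Q]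
    (hQ : ρ.map (fun ω => (firstN n ω, ω)) = (ρ.map (firstN n)) ⊗ₘ Q) (m : ℕ) :
    ρ.map (fun ω => (firstN n ω, empShift n m ω)) =
      (ρ.map (firstN n)) ⊗ₘ ((empKer n m pt hpt) ∘ₖ Q) := by
  have hfm := measurable_firstN (S := S) n
  have hem := measurable_empShift (S := S) n m
  have := Measure.isProbabilityMeasure_map (μ := ρ) hfm.aemeasurable
  have hm1 : Measurable fun ω : ℕ → S => (firstN n ω, empShift n m ω) := hfm.prodMk hem
  have hm2 : Measurable fun ω : ℕ → S => (firstN n ω, ω) := hfm.prodMk measurable_id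
  have := Measure.isProbabilityMeasure_map (μ := ρ) hm1.aemeasurable
  refine Measure.ext_prod fun {A B} hA hB => ?_
  have hg : Measurable fun P : ProbabilityMeasure S => ipiK (pmK S) P (empShift n m ⁻¹' B) :=
    Kernel.measurable_coe _ (hem hB)
  have hA' := hfm hA
  have hB' := hem hB
  -- right-hand side
  have hR : ((ρ.map (firstN n)) ⊗ₘ ((empKer n m pt hpt) ∘ₖ Q)) (A ×ˢ B) =
      ∫⁻ ω, (firstN n ⁻¹' A).indicator 1 ω * ipiK (pmK S) (pt ω) (empShift n m ⁻¹' B) ∂ρ := by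
    rw [Measure.compProd_apply_prod hA hB]
    have hF : Measurable fun z : (Fin n → S) × (ℕ → S) =>
        A.indicator 1 z.1 * empKer n m pt hpt z.2 B :=
      ((measurable_one.indicator hA).comp measurable_fst).mul
        ((Kernel.measurable_coe _ hB).comp measurable_snd)
    have h1 : ∫⁻ z, A.indicator 1 z.1 * empKer n m pt hpt z.2 B ∂((ρ.map (firstN n)) ⊗ₘ Q) =
        ∫⁻ v in A, ((empKer n m pt hpt) ∘ₖ Q) v B ∂(ρ.map (firstN n)) := by
      rw [Measure.lintegral_compProd hF, ← lintegral_indicator hA]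
      refine lintegral_congr fun v => ?_
      by_cases hv : v ∈ A <;> simp [hv, Kernel.comp_apply' _ _ _ hB]
    rw [← h1, ← hQ, lintegral_map hF hm2]
    refine lintegral_congr fun ω => ?_
    rw [empKer_apply n m pt hpt ω hB]
    rfl
  rw [hR, Measure.map_apply hm1 (hA.prod hB)]
  have hF2 : Measurable fun z : ProbabilityMeasure S × (ℕ → S) =>
      (firstN n ⁻¹' A).indicator (1 : (ℕ → S) → ℝ≥0∞) z.2 *
        ipiK (pmK S) z.1 (empShift n m ⁻¹' B) :=
    ((measurable_one.indicator hA').comp measurable_snd).mul (hg.comp measurable_fst)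
  have hF3 : Measurable fun z : ProbabilityMeasure S × (ℕ → S) =>
      (firstN n ⁻¹' A ∩ empShift n m ⁻¹' B).indicator (1 : (ℕ → S) → ℝ≥0∞) z.2 :=
    (measurable_one.indicator (hA'.inter hB')).comp measurable_snd
  rw [direct_lintegral hpt hd hF2]
  have hL : ρ ((fun ω => (firstN n ω, empShift n m ω)) ⁻¹' A ×ˢ B) =
      ∫⁻ ω, (firstN n ⁻¹' A ∩ empShift n m ⁻¹' B).indicator 1 ω ∂ρ := by
    rw [lintegral_indicator_one (hA'.inter hB')]
    rfl
  rw [hL, direct_lintegral hpt hd hF3]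
  refine lintegral_congr fun ω => ?_
  have hind := (indep_first_emp (pt ω : Measure S) n m).measure_inter_preimage_eq_mul A B hA hB
  dsimp only
  rw [lintegral_indicator_one (hA'.inter hB'),
    lintegral_mul_const _ (measurable_one.indicator hA'), lintegral_indicator_one hA']
  exact hind

lemma qm_eq [Nonempty S] {ρ : Measure (ℕ → S)} [IsProbabilityMeasure ρ]
    {pt : (ℕ → S) → ProbabilityMeasure S} (hpt : Measurable pt)
    (hd : ρ.map (fun ω => (pt ω, ω)) = (ρ.map pt) ⊗ₘ (ipiK (pmK S)))
    {n : ℕ} (Q : Kernel (Fin n → S) (ℕ → S)) [IsMarkovKernel Q]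
    (hQ : ρ.map (fun ω => (firstN n ω, ω)) = (ρ.map (firstN n)) ⊗ₘ Q) {m : ℕ} (hm : 1 ≤ m)
    (q : Kernel (Fin n → S) (Measure S)) [IsMarkovKernel q]
    (hq : ρ.map (fun ω => (firstN n ω, empShift n m ω)) = (ρ.map (firstN n)) ⊗ₘ q) :
    ∀ᵐ v ∂(ρ.map (firstN n)), q v = ((empKer n m pt hpt) ∘ₖ Q) v := by
  have hfm := measurable_firstN (S := S) n
  have hem := measurable_empShift (S := S) n m
  have := Measure.isProbabilityMeasure_map (μ := ρ) hfm.aemeasurable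
  have hm1 : Measurable fun ω : ℕ → S => (firstN n ω, empShift n m ω) := hfm.prodMk hem
  obtain ⟨R, hR, hRe⟩ := exists_retract (S := S)
  have := countablyGenerated_PM (S := S)
  have hq' := compProd_post hpt hd Q hQ m
  have hmeq : (ρ.map (firstN n)) ⊗ₘ (q.map R) =
      (ρ.map (firstN n)) ⊗ₘ (((empKer n m pt hpt) ∘ₖ Q).map R) := by
    rw [Measure.compProd_map hR, Measure.compProd_map hR, ← hq, ← hq']
  have hae := Kernel.ae_eq_of_compProd_eq hmeq
  have hP : MeasurableSet {z : (Fin n → S) × Measure S | IsProbabilityMeasure z.2} :=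
    measurable_snd ProbabilityMeasure.measurableSet_isProbabilityMeasure
  have hbase : ∀ᵐ z ∂(ρ.map (fun ω => (firstN n ω, empShift n m ω))),
      IsProbabilityMeasure z.2 := by
    rw [ae_map_iff hm1.aemeasurable hP]
    exact Filter.Eventually.of_forall fun ω => empShift_prob n hm ω
  have hs1 := Measure.ae_ae_of_ae_compProd (hq ▸ hbase)
  have hs2 := Measure.ae_ae_of_ae_compProd (hq' ▸ hbase)
  have back : ∀ μ : Measure (Measure S), (∀ᵐ P ∂μ, IsProbabilityMeasure P) →
      (μ.map R).map (fun P : ProbabilityMeasure S => (P : Measure S)) = μ := by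
    intro μ hμ
    have hcoe : Measurable fun P : ProbabilityMeasure S => (P : Measure S) :=
      measurable_subtype_coe
    rw [Measure.map_map hcoe hR]
    conv_rhs => rw [← Measure.map_id (μ := μ)]
    refine Measure.map_congr ?_
    filter_upwards [hμ] with P hP
    exact hRe P hP
  filter_upwards [hae, hs1, hs2] with v h1 h2 h3
  rw [Kernel.map_apply _ hR, Kernel.map_apply _ hR] at h1
  rw [← back _ h2, h1, back _ h3]

lemma ipiK_map {A X Y : Type*} [MeasurableSpace A] [MeasurableSpace X] [MeasurableSpace Y]
    (k : Kernel A X) [IsMarkovKernel k] {f : X → Y} (hf : Measurable f) (a : A)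
    (P : ProbabilityMeasure Y) (h : (k a).map f = P) :
    (ipiK k a).map (fun z i => f (z i)) = ipiK (pmK Y) P := by
  have h1 := Measure.infinitePi_map_pi (μ := fun _ : ℕ => k a) (f := fun _ => f) (fun _ => hf)
  refine h1.trans ?_
  show _ = Measure.infinitePi fun _ : ℕ => (P : Measure Y)
  simp only [h]

lemma perN_bound [Nonempty S] {p : ℝ} (hp : 1 ≤ p) (n : ℕ) {m : ℕ} (hm : 1 ≤ m)
    {pt : (ℕ → S) → ProbabilityMeasure S} (hpt : Measurable pt)
    (Q : Kernel (Fin n → S) (ℕ → S)) [IsMarkovKernel Q] (v : Fin n → S)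
    (P : ProbabilityMeasure S) :
    ENNReal.ofReal (wassW (fun μ ν => wassW (fun u v : S => dist u v) p μ ν) p
      (((empKer n m pt hpt) ∘ₖ Q) v) ((ipiK (pmK S) P).map (empShift n m))) ^ p ≤
    ∫⁻ ω', VV p (pt ω', P) ∂(Q v) := by
  refine ENNReal.le_of_forall_pos_le_add fun δ hδ _ => ?_
  obtain ⟨G, hG, hGp⟩ := exists_sel (S := S) p (δ := (δ : ℝ≥0∞)) (by simpa using hδ.ne')
  have hem := measurable_empShift (S := S) n m
  let kG : Kernel (ℕ → S) (S × S) :=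
    ⟨fun ω => G (pt ω, P), hG.comp (hpt.prodMk measurable_const)⟩
  have hkG : ∀ ω, kG ω = G (pt ω, P) := fun ω => rfl
  have : IsMarkovKernel kG := ⟨fun ω => ⟨by
    have h := (hGp (pt ω, P)).1
    rw [hkG, ← Set.preimage_univ (f := Prod.fst), ← Measure.map_apply measurable_fst .univ, h]
    simp⟩⟩
  have hf1 : Measurable fun (z : ℕ → S × S) (i : ℕ) => (z i).1 :=
    measurable_pi_lambda _ fun i => measurable_fst.comp (measurable_pi_apply i)
  have hf2 : Measurable fun (z : ℕ → S × S) (i : ℕ) => (z i).2 :=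
    measurable_pi_lambda _ fun i => measurable_snd.comp (measurable_pi_apply i)
  have he1 : Measurable fun (z : ℕ → S × S) => empShift n m (fun i => (z i).1) := hem.comp hf1
  have he2 : Measurable fun (z : ℕ → S × S) => empShift n m (fun i => (z i).2) := hem.comp hf2
  have hΦ : Measurable fun (z : ℕ → S × S) =>
    (empShift n m (fun i => (z i).1), empShift n m (fun i => (z i).2)) := he1.prodMk he2
  let θ : Measure (ℕ → S × S) := (Q v).bind (ipiK kG)
  have hk1 : ∀ ω, (ipiK kG ω).map (fun z i => (z i).1) = ipiK (pmK S) (pt ω) := fun ω =>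
    ipiK_map kG measurable_fst ω (pt ω) (hGp (pt ω, P)).1
  have hk2 : ∀ ω, (ipiK kG ω).map (fun z i => (z i).2) = ipiK (pmK S) P := fun ω =>
    ipiK_map kG measurable_snd ω P (hGp (pt ω, P)).2.1
  have m1 : (θ.map fun z => (empShift n m (fun i => (z i).1),
      empShift n m (fun i => (z i).2))).map Prod.fst = ((empKer n m pt hpt) ∘ₖ Q) v := by
    rw [Measure.map_map measurable_fst hΦ]
    ext B hB
    rw [Measure.map_apply (measurable_fst.comp hΦ) hB, Kernel.comp_apply' _ _ _ hB,
      Measure.bind_apply ((measurable_fst.comp hΦ) hB) (Kernel.aemeasurable _)]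
    refine lintegral_congr fun ω => ?_
    rw [empKer_apply n m pt hpt ω hB, ← hk1, Measure.map_apply hf1 (hem hB)]
    rfl
  have m2 : (θ.map fun z => (empShift n m (fun i => (z i).1),
      empShift n m (fun i => (z i).2))).map Prod.snd = (ipiK (pmK S) P).map (empShift n m) := by
    rw [Measure.map_map measurable_snd hΦ]
    ext B hB
    rw [Measure.map_apply (measurable_snd.comp hΦ) hB, Measure.map_apply hem hB,
      Measure.bind_apply ((measurable_snd.comp hΦ) hB) (Kernel.aemeasurable _)]
    have : ∀ ω, ipiK kG ω ((Prod.snd ∘ fun z => (empShift n m (fun i => (z i).1),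
      empShift n m (fun i => (z i).2))) ⁻¹' B) = ipiK (pmK S) P (empShift n m ⁻¹' B) := by
      intro ω
      rw [← hk2 ω, Measure.map_apply hf2 (hem hB)]
      rfl
    simp only [this, lintegral_const, measure_univ, mul_one]
  refine (wassW_pow_le _ (fun μ ν => wassW_nonneg _ (fun _ _ => dist_nonneg) p μ ν) hp _
    m1 m2).trans ?_
  refine (lintegral_map_le _ _).trans ?_
  refine (lintegral_mono fun z => emp_wass hp n m z).trans ?_
  have hed := measurable_edist_pow (S := S) p
  have hme : ∀ i : ℕ, Measurable fun z : ℕ → S × S => edist (z i).1 (z i).2 ^ p := fun i =>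
    hed.comp (measurable_pi_apply i)
  have hms : Measurable fun z : ℕ → S × S =>
      (m : ℝ≥0∞)⁻¹ * ∑ i ∈ Finset.range m, edist (z (i + n)).1 (z (i + n)).2 ^ p :=
    (Finset.measurable_sum _ fun i _ => hme (i + n)).const_mul _
  rw [Measure.lintegral_bind (Kernel.aemeasurable _) hms.aemeasurable]
  have hb : ∀ ω, ∫⁻ z, (m : ℝ≥0∞)⁻¹ * ∑ i ∈ Finset.range m,
      edist (z (i + n)).1 (z (i + n)).2 ^ p ∂(ipiK kG ω) ≤ VV p (pt ω, P) + δ := by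
    intro ω
    rw [lintegral_const_mul _ (Finset.measurable_sum _ fun i _ => hme (i + n)),
      lintegral_finsetSum _ fun i _ => hme (i + n)]
    have hi : ∀ j : ℕ, ∫⁻ z, edist (z j).1 (z j).2 ^ p ∂(ipiK kG ω) ≤ VV p (pt ω, P) + δ := by
      intro j
      have hmap : (ipiK kG ω).map (fun z => z j) = kG ω :=
        Measure.infinitePi_map_eval (fun _ : ℕ => kG ω) j
      have := (hGp (pt ω, P)).2.2
      rw [← hkG, ← hmap, lintegral_map hed (measurable_pi_apply j)] at this
      exact this
    calc (m : ℝ≥0∞)⁻¹ * ∑ i ∈ Finset.range m, _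
        ≤ (m : ℝ≥0∞)⁻¹ * ∑ i ∈ Finset.range m, (VV p (pt ω, P) + δ) := by
          gcongr with i _; exact hi _
      _ = VV p (pt ω, P) + δ := by
          rw [Finset.sum_const, Finset.card_range, nsmul_eq_mul, ← mul_assoc,
            ENNReal.inv_mul_cancel (by simp; omega) (by simp), one_mul]
  refine (lintegral_mono hb).trans ?_
  rw [lintegral_add_right _ measurable_const]
  simp

end perN

section final

variable {S : Type*} [MetricSpace S] [TopologicalSpace.SeparableSpace S]
    [MeasurableSpace S] [BorelSpace S]

lemma post_concentrate {ρ : Measure (ℕ → S)} [IsProbabilityMeasure ρ] {n : ℕ}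
    (Q : Kernel (Fin n → S) (ℕ → S)) [IsMarkovKernel Q]
    (hQ : ρ.map (fun ω => (firstN n ω, ω)) = (ρ.map (firstN n)) ⊗ₘ Q) :
    ∀ᵐ ω ∂ρ, ∀ᵐ ω' ∂(Q (firstN n ω)), firstN n ω' = firstN n ω := by
  have : SecondCountableTopology S := UniformSpace.secondCountable_of_separable S
  have hfm := measurable_firstN (S := S) n
  have := Measure.isProbabilityMeasure_map (μ := ρ) hfm.aemeasurable
  have hm2 : Measurable fun ω : ℕ → S => (firstN n ω, ω) := hfm.prodMk measurable_id
  have hP : MeasurableSet {z : (Fin n → S) × (ℕ → S) | firstN n z.2 = z.1} :=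
    measurableSet_eq_fun (hfm.comp measurable_snd) measurable_fst
  have hbase : ∀ᵐ z ∂(ρ.map (fun ω => (firstN n ω, ω))), firstN n z.2 = z.1 := by
    rw [ae_map_iff hm2.aemeasurable hP]
    exact Filter.Eventually.of_forall fun ω => rfl
  exact ae_of_ae_map hfm.aemeasurable (Measure.ae_ae_of_ae_compProd (hQ ▸ hbase))

end final

/-- merging of predictive distributions: under the hypotheses of the
posterior-merging theorem, for every `m ≥ 1`, `ρ`-almost surely
`limsup_n b_n d^{(p)}_{[[S]_p]}( q_m(ξ^{(n)}), p̂_n^∞ ∘ ẽ_{n,m}⁻¹ ) ≤ Y_p(p̃)`. -/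
theorem predictive_merging
    {S : Type*} [MetricSpace S] [TopologicalSpace.SeparableSpace S]
    [MeasurableSpace S] [BorelSpace S]
    (hRadon : ∀ μ : Measure S, IsProbabilityMeasure μ → μ.InnerRegular)
    (iid : Measure S → Measure (ℕ → S))
    (hiid : ∀ 𝔭 : Measure S, IsProbabilityMeasure 𝔭 →
      IsProbabilityMeasure (iid 𝔭) ∧
        ∀ (n : ℕ) (A : Fin n → Set S), (∀ i, MeasurableSet (A i)) →
          iid 𝔭 {ω | ∀ i : Fin n, ω (i : ℕ) ∈ A i} = ∏ i, 𝔭 (A i))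
    (ρ : Measure (ℕ → S)) [IsProbabilityMeasure ρ]
    (hexch : ∀ σ : Equiv.Perm ℕ, ρ.map (fun ω => ω ∘ σ) = ρ)
    (ptilde : (ℕ → S) → Measure S) (hptilde_meas : Measurable ptilde)
    (hptilde_prob : ∀ᵐ ω ∂ρ, IsProbabilityMeasure (ptilde ω))
    (hdirect : ∀ C : Set (ℕ → S), MeasurableSet C → ∀ B : Set (Measure S), MeasurableSet B →
      ρ (C ∩ ptilde ⁻¹' B) = ∫⁻ ω in ptilde ⁻¹' B, iid (ptilde ω) C ∂ρ)
    (p : ℝ) (hp : 1 ≤ p)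
    (phat : (n : ℕ) → (Fin n → S) → Measure S)
    (hphat_meas : ∀ n, Measurable (phat n))
    (hphatWp : ∀ n v, MemWp p (phat n v))
    (hptildeWp : ∀ᵐ ω ∂ρ, MemWp p (ptilde ω))
    -- the conditional distributions `q_m(ξ^{(n)})` of `ẽ_{n,m}` given `ξ^{(n)}`
    (qm : (m n : ℕ) → (Fin n → S) → Measure (Measure S))
    (hqm_prob : ∀ m n v, IsProbabilityMeasure (qm m n v))
    (hqm_meas : ∀ m n, Measurable (qm m n))
    (hqm : ∀ (m n : ℕ) (A : Set (Fin n → S)), MeasurableSet A →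
      ∀ B : Set (Measure S), MeasurableSet B →
        ρ {ω | (fun i : Fin n => ω (i : ℕ)) ∈ A ∧ empShift n m ω ∈ B}
          = ∫⁻ ω in {ω | (fun i : Fin n => ω (i : ℕ)) ∈ A},
              qm m n (fun i : Fin n => ω (i : ℕ)) B ∂ρ)
    -- the sequence `b_n`
    (b : ℕ → ℝ) (hbpos : ∀ n, 0 < b n) (hbmono : Monotone b)
    (hbdiv : Filter.Tendsto b Filter.atTop Filter.atTop)
    -- the random constants `C_p(p̃)` and `Y_p(p̃)`
    (Cp Yp : Measure S → ℝ)
    (hCp_meas : Measurable fun ω => Cp (ptilde ω))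
    (hYp_meas : Measurable fun ω => Yp (ptilde ω))
    (hCp_int : Integrable (fun ω => Cp (ptilde ω)) ρ)
    (hMain1 : ∀ᵐ ω ∂ρ, ∫⁻ ω', ⨆ n : ℕ, ENNReal.ofReal
        ((b (n + 1) * wassW (fun u v => dist u v) p (ptilde ω)
          (phat (n + 1) (fun i : Fin (n + 1) => ω' (i : ℕ)))) ^ p) ∂(iid (ptilde ω))
        ≤ ENNReal.ofReal (Cp (ptilde ω)))
    (hMain2 : ∀ᵐ ω ∂ρ, ∀ᵐ ω' ∂(iid (ptilde ω)),
      Filter.limsup (fun n : ℕ => ENNReal.ofReal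
          (b (n + 1) * wassW (fun u v => dist u v) p (ptilde ω)
            (phat (n + 1) (fun i : Fin (n + 1) => ω' (i : ℕ))))) Filter.atTop
        ≤ ENNReal.ofReal (Yp (ptilde ω))) :
    ∀ (m : ℕ), 1 ≤ m →
      ∀ᵐ ω ∂ρ, Filter.limsup (fun n : ℕ => ENNReal.ofReal
          (b n * wassW (fun μ ν => wassW (fun u v => dist u v) p μ ν) p
            (qm m n (fun i : Fin n => ω (i : ℕ)))
            ((iid (phat n (fun i : Fin n => ω (i : ℕ)))).map (empShift n m)))) Filter.atTop
        ≤ ENNReal.ofReal (Yp (ptilde ω)) := by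
  have hp0 : 0 < p := by linarith
  have hpi : 0 < 1 / p := by positivity
  obtain ⟨ω0⟩ : Nonempty (ℕ → S) := ρ.nonempty_of_neZero
  have hS : Nonempty S := ⟨ω0 0⟩
  obtain ⟨R, hR, hRe⟩ := exists_retract (S := S)
  let pt : (ℕ → S) → ProbabilityMeasure S := fun ω => R (ptilde ω)
  have hpt : Measurable pt := hR.comp hptilde_meas
  have hpte : ∀ᵐ ω ∂ρ, (pt ω : Measure S) = ptilde ω := by
    filter_upwards [hptilde_prob] with ω h using hRe _ h
  have hiid' : ∀ P : ProbabilityMeasure S, iid P = ipiK (pmK S) P := iid_eq iid hiid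
  have hd := direct_compProd iid hiid' ρ ptilde hdirect pt hpt hpte
  choose Q hQM hQ using fun n : ℕ => exists_posterior hRadon ρ (firstN n) (measurable_firstN n)
  let ph : (n : ℕ) → (Fin n → S) → ProbabilityMeasure S := fun n v => ⟨phat n v, (hphatWp n v).1⟩
  have hph : ∀ n, Measurable (ph n) := fun n => (hphat_meas n).subtype_mk
  let Z : ℕ → ProbabilityMeasure S × (ℕ → S) → ℝ≥0∞ := fun n x =>
    ENNReal.ofReal (b (n + 1)) * VV p (x.1, ph (n + 1) (firstN (n + 1) x.2)) ^ (1 / p)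
  have hZ : ∀ n, Measurable (Z n) := fun n =>
    (((measurable_VV p).comp (measurable_fst.prodMk ((hph (n + 1)).comp
      ((measurable_firstN (n + 1)).comp measurable_snd)))).pow_const _).const_mul _
  have hwn : ∀ μ ν : Measure S, 0 ≤ wassW (fun u v : S => dist u v) p μ ν := fun μ ν =>
    wassW_nonneg _ (fun _ _ => dist_nonneg) p μ ν
  have hZle : ∀ᵐ ω ∂ρ, ∀ n ω', Z n (pt ω, ω') ≤ ENNReal.ofReal
      (b (n + 1) * wassW (fun u v => dist u v) p (ptilde ω)
        (phat (n + 1) (fun i : Fin (n + 1) => ω' (i : ℕ)))) := by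
    filter_upwards [hpte, hptildeWp] with ω h1 h2 n ω'
    have h3 := VV_le_wassW hp (pt ω) (ph (n + 1) (firstN (n + 1) ω')) (h1 ▸ h2)
      (hphatWp (n + 1) _)
    rw [ENNReal.ofReal_mul (hbpos _).le]
    rw [h1] at h3
    exact mul_le_mul_right h3 _
  -- the limsup bound
  have hlim : ∀ᵐ ω ∂ρ, Filter.limsup (fun n => Z n (pt ω, ω)) Filter.atTop ≤
      ENNReal.ofReal (Yp (ptilde ω)) := by
    refine ae_of_direct hpt hd (L := fun x => Filter.limsup (fun n => Z n x) Filter.atTop)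
      (Measurable.limsup hZ) (fun ω => ENNReal.ofReal (Yp (ptilde ω))) ?_
    filter_upwards [hpte, hZle, hMain2] with ω h1 h2 h3
    rw [← hiid', h1]
    filter_upwards [h3] with ω' h4
    exact (Filter.limsup_le_limsup (Filter.Eventually.of_forall fun n => h2 n ω')).trans h4
  let U : ℕ → (ℕ → S) → ℝ≥0∞ := fun N ω => ⨆ k, Z (k + N) (pt ω, ω) ^ p
  have hpm : Measurable fun ω => (pt ω, ω) := hpt.prodMk measurable_id
  have hU : ∀ N, Measurable (U N) := fun N =>
    Measurable.iSup fun k => ((hZ (k + N)).comp hpm).pow_const p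
  have hUi : ∀ N, ∫⁻ ω, U N ω ∂ρ ≠ ∞ := by
    intro N
    have hF : Measurable fun x : ProbabilityMeasure S × (ℕ → S) => ⨆ k, Z k x ^ p :=
      Measurable.iSup fun k => (hZ k).pow_const p
    have h1 : ∫⁻ ω, U N ω ∂ρ ≤ ∫⁻ ω, ⨆ k, Z k (pt ω, ω) ^ p ∂ρ :=
      lintegral_mono fun ω => iSup_le fun k => le_iSup (fun k => Z k (pt ω, ω) ^ p) (k + N)
    have h2 : ∫⁻ ω, ⨆ k, Z k (pt ω, ω) ^ p ∂ρ ≤ ∫⁻ ω, ENNReal.ofReal (Cp (ptilde ω)) ∂ρ := by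
      rw [direct_lintegral hpt hd hF]
      refine lintegral_mono_ae ?_
      filter_upwards [hpte, hZle, hMain1] with ω h1 h2 h3
      rw [← hiid', h1]
      refine (lintegral_mono fun ω' => iSup_mono fun n => ?_).trans h3
      rw [← ENNReal.ofReal_rpow_of_nonneg (mul_nonneg (hbpos _).le (hwn _ _)) hp0.le]
      exact ENNReal.rpow_le_rpow (h2 n ω') hp0.le
    have h3 : ∫⁻ ω, ENNReal.ofReal (Cp (ptilde ω)) ∂ρ < ∞ := by
      refine lt_of_le_of_lt (lintegral_mono fun ω => ?_) hCp_int.hasFiniteIntegral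
      exact Real.ofReal_le_enorm _
    exact ((h1.trans h2).trans_lt h3).ne
  have hlevy : ∀ᵐ ω ∂ρ, ∀ N, Filter.Tendsto (fun n => ∫⁻ ω', U N ω' ∂(Q n (firstN n ω)))
      Filter.atTop (nhds (U N ω)) :=
    ae_all_iff.2 fun N => levy_posterior ρ Q hQ (U N) (hU N) (hUi N)
  have hconc : ∀ᵐ ω ∂ρ, ∀ n, ∀ᵐ ω' ∂(Q n (firstN n ω)), firstN n ω' = firstN n ω :=
    ae_all_iff.2 fun n => post_concentrate (Q n) (hQ n)
  intro m hm
  have hqeq : ∀ᵐ ω ∂ρ, ∀ n, qm m n (firstN n ω) =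
      ((empKer n m pt hpt) ∘ₖ (Q n)) (firstN n ω) := by
    refine ae_all_iff.2 fun n => ?_
    have hfm := measurable_firstN (S := S) n
    let q : Kernel (Fin n → S) (Measure S) := ⟨qm m n, hqm_meas m n⟩
    have : IsMarkovKernel q := ⟨fun v => hqm_prob m n v⟩
    have := Measure.isProbabilityMeasure_map (μ := ρ) hfm.aemeasurable
    have hm1 : Measurable fun ω : ℕ → S => (firstN n ω, empShift n m ω) :=
      hfm.prodMk (measurable_empShift n m)
    have := Measure.isProbabilityMeasure_map (μ := ρ) hm1.aemeasurable
    have hq : ρ.map (fun ω => (firstN n ω, empShift n m ω)) = (ρ.map (firstN n)) ⊗ₘ q := by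
      refine Measure.ext_prod fun {A B} hA hB => ?_
      rw [Measure.map_apply hm1 (hA.prod hB), Measure.compProd_apply_prod hA hB,
        setLIntegral_map hA (Kernel.measurable_coe _ hB) hfm]
      exact hqm m n A hA B hB
    exact ae_of_ae_map hfm.aemeasurable (qm_eq hpt hd (Q n) (hQ n) hm q hq)
  filter_upwards [hlim, hlevy, hconc, hqeq] with ω h1 h2 h3 h4
  rw [← Filter.limsup_nat_add _ 1]
  have key : ∀ N n, N ≤ n → ENNReal.ofReal
      (b (n + 1) * wassW (fun μ ν => wassW (fun u v => dist u v) p μ ν) p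
        (qm m (n + 1) (firstN (n + 1) ω))
        ((iid (phat (n + 1) (firstN (n + 1) ω))).map (empShift (n + 1) m))) ≤
      (∫⁻ ω', U N ω' ∂(Q (n + 1) (firstN (n + 1) ω))) ^ (1 / p) := by
    intro N n hn
    have hb := perN_bound hp (n + 1) hm hpt (Q (n + 1)) (firstN (n + 1) ω)
      (ph (n + 1) (firstN (n + 1) ω))
    rw [← h4 (n + 1), ← hiid'] at hb
    rw [one_div, ENNReal.le_rpow_inv_iff hp0, ENNReal.ofReal_mul (hbpos _).le,
      ENNReal.mul_rpow_of_nonneg _ _ hp0.le]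
    refine (mul_le_mul_right hb _).trans ?_
    have hVm : Measurable fun ω' => VV p (pt ω', ph (n + 1) (firstN (n + 1) ω)) :=
      (measurable_VV p).comp (hpt.prodMk measurable_const)
    rw [← lintegral_const_mul _ hVm]
    refine lintegral_mono_ae ?_
    filter_upwards [h3 (n + 1)] with ω' h5
    have h6 : ENNReal.ofReal (b (n + 1)) ^ p * VV p (pt ω', ph (n + 1) (firstN (n + 1) ω)) =
        Z n (pt ω', ω') ^ p := by
      simp only [Z]
      rw [ENNReal.mul_rpow_of_nonneg _ _ hp0.le, ← ENNReal.rpow_mul,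
        one_div_mul_cancel hp0.ne', ENNReal.rpow_one, h5]
    rw [h6]
    have := le_iSup (fun k => Z (k + N) (pt ω', ω') ^ p) (n - N)
    simp only [Nat.sub_add_cancel hn] at this
    exact this
  refine le_of_forall_gt_imp_ge_of_dense fun c hc => ?_
  have hev := Filter.eventually_lt_of_limsup_lt (h1.trans_lt hc)
  obtain ⟨N, hN⟩ := Filter.eventually_atTop.1 hev
  have hUN : U N ω ^ (1 / p) ≤ c := by
    rw [one_div, ENNReal.rpow_inv_le_iff hp0]
    exact iSup_le fun k => ENNReal.rpow_le_rpow (hN (k + N) (by omega)).le hp0.le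
  have ht : Filter.Tendsto (fun n => (∫⁻ ω', U N ω' ∂(Q (n + 1) (firstN (n + 1) ω))) ^ (1 / p))
      Filter.atTop (nhds (U N ω ^ (1 / p))) :=
    (ENNReal.continuous_rpow_const.tendsto _).comp
      ((Filter.tendsto_add_atTop_iff_nat 1).2 (h2 N))
  refine le_trans ?_ hUN
  rw [← ht.limsup_eq]
  refine Filter.limsup_le_limsup ?_
  filter_upwards [Filter.eventually_ge_atTop N] with n hn
  exact key N n hn

end
end

section
/- Let M be a symmetric positive-definite d×d real matrix with eigenvalues λ_1, …, λ_d (counted with multiplicity), and suppose det(M) ≥ ε for some ε ∈ (0,1). Then there exists a positive constant K(ε,d), depending only on ε and d, such that Σ_{j=1}^d (λ_j − 1 − log λ_j) ≤ K(ε,d) · Σ_{j=1}^d (λ_j − 1)² = K(ε,d) · ‖M − Id_d‖_F², where Id_d is the d×d identity matrix and ‖·‖_F the Frobenius norm. -/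
open scoped ENNReal

noncomputable section

/-- The Frobenius norm of a real square matrix. -/
noncomputable def frobNorm {d : ℕ} (A : Matrix (Fin d) (Fin d) ℝ) : ℝ :=
  Real.sqrt (∑ i, ∑ j, A i j ^ 2)

theorem sum_eig_aux {d : ℕ} (M : Matrix (Fin d) (Fin d) ℝ) (hM : M.IsHermitian) :
    ∑ j, (hM.eigenvalues j - 1) ^ 2 = frobNorm (M - 1) ^ 2 := by
  have hφ : ∀ X : Matrix (Fin d) (Fin d) ℝ,
      (Unitary.conjStarAlgAut ℝ _ hM.eigenvectorUnitary X).trace = X.trace := by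
    intro X
    rw [Unitary.conjStarAlgAut_apply, Matrix.trace_mul_comm, ← mul_assoc]
    simp
  have h1 : ((M - 1) * (M - 1)).trace = ∑ j, (hM.eigenvalues j - 1) ^ 2 := by
    have h2 : (M - 1) * (M - 1) = Unitary.conjStarAlgAut ℝ _ hM.eigenvectorUnitary
        ((Matrix.diagonal hM.eigenvalues - 1) * (Matrix.diagonal hM.eigenvalues - 1)) := by
      have h3 : M = Unitary.conjStarAlgAut ℝ _ hM.eigenvectorUnitary
        (Matrix.diagonal hM.eigenvalues) := hM.spectral_theorem
      rw [map_mul, map_sub, map_one, ← h3]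
    rw [h2, hφ, ← Matrix.diagonal_one, Matrix.diagonal_sub, Matrix.diagonal_mul_diagonal,
      Matrix.trace_diagonal]
    exact Finset.sum_congr rfl fun j _ => (sq _).symm
  rw [← h1, frobNorm, Real.sq_sqrt (by positivity), Matrix.trace]
  refine Finset.sum_congr rfl fun i _ => ?_
  rw [Matrix.diag_apply, Matrix.mul_apply]
  refine Finset.sum_congr rfl fun j _ => ?_
  have hs : (M - 1).IsHermitian := hM.sub Matrix.isHermitian_one
  have := hs.apply i j
  rw [star_trivial] at this
  rw [this, sq]

theorem log_aux (x : ℝ) (hx : 1 / 2 ≤ x) : x - 1 - Real.log x ≤ 2 * (x - 1) ^ 2 := by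
  have hx0 : 0 < x := by linarith
  have h := Real.one_sub_inv_le_log_of_pos hx0
  have h2 : x - 1 - (1 - x⁻¹) = x⁻¹ * (x - 1) ^ 2 := by field_simp
  have h3 : x⁻¹ ≤ 2 := by
    rw [inv_le_comm₀ hx0 (by norm_num)]; linarith
  have := mul_le_mul_of_nonneg_right h3 (sq_nonneg (x - 1))
  linarith

theorem sum_log_aux (d : ℕ) (ε : ℝ) (hε0 : 0 < ε) (hε1 : ε < 1) (l : Fin d → ℝ)
    (hl : ∀ j, 0 < l j) (hp : ε ≤ ∏ j, l j) :
    ∑ j, (l j - 1 - Real.log (l j)) ≤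
      (2 + 4 * (d + -Real.log ε)) * ∑ j, (l j - 1) ^ 2 := by
  have hL : 0 < -Real.log ε := by linarith [Real.log_neg hε0 hε1]
  have hS : 0 ≤ ∑ j, (l j - 1) ^ 2 := Finset.sum_nonneg fun j _ => sq_nonneg _
  have hd : (0 : ℝ) ≤ d := Nat.cast_nonneg d
  by_cases h : ∀ j, 1 / 2 ≤ l j
  · have h1 : ∑ j, (l j - 1 - Real.log (l j)) ≤ 2 * ∑ j, (l j - 1) ^ 2 := by
      rw [Finset.mul_sum]
      exact Finset.sum_le_sum fun j _ => log_aux _ (h j)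
    have : 0 ≤ (4 * (d + -Real.log ε)) * ∑ j, (l j - 1) ^ 2 := by positivity
    linarith
  · push Not at h
    obtain ⟨k, hk⟩ := h
    have h4 : 1 / 4 ≤ ∑ j, (l j - 1) ^ 2 := by
      have := Finset.single_le_sum (f := fun j => (l j - 1) ^ 2)
        (fun j _ => sq_nonneg _) (Finset.mem_univ k)
      have h5 : (1 : ℝ) / 4 ≤ (l k - 1) ^ 2 := by nlinarith
      exact h5.trans this
    have h5 : Real.log ε ≤ ∑ j, Real.log (l j) := by
      rw [← Real.log_prod fun j _ => (hl j).ne']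
      exact Real.log_le_log hε0 hp
    have h6 : ∑ j, (l j - 1) ≤ ∑ j, (l j - 1) ^ 2 + d := by
      have : ∑ j, (l j - 1) ≤ ∑ j, ((l j - 1) ^ 2 + 1) :=
        Finset.sum_le_sum fun j _ => by nlinarith [sq_nonneg (l j - 1 - 1 / 2)]
      simpa [Finset.sum_add_distrib] using this
    rw [Finset.sum_sub_distrib]
    have h7 : 0 ≤ (d + -Real.log ε) * (4 * ∑ j, (l j - 1) ^ 2 - 1) :=
      mul_nonneg (by linarith) (by linarith)
    nlinarith

/-- for a symmetric positive-definite matrix `M` with `det M ≥ ε`,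
`∑ (λⱼ - 1 - log λⱼ) ≤ K(ε,d) ∑ (λⱼ - 1)² = K(ε,d) ‖M - Id‖_F²`,
with a constant `K(ε,d)` depending only on `ε` and `d`. -/
theorem eigen_kullback_bound (d : ℕ) (ε : ℝ) (hε0 : 0 < ε) (hε1 : ε < 1) :
    ∃ K : ℝ, 0 < K ∧
      ∀ (M : Matrix (Fin d) (Fin d) ℝ) (hM : M.PosDef), ε ≤ M.det →
        (∑ j, (hM.1.eigenvalues j - 1 - Real.log (hM.1.eigenvalues j))
            ≤ K * ∑ j, (hM.1.eigenvalues j - 1) ^ 2) ∧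
          (∑ j, (hM.1.eigenvalues j - 1) ^ 2 = frobNorm (M - 1) ^ 2) := by
  have hL : 0 < -Real.log ε := by linarith [Real.log_neg hε0 hε1]
  refine ⟨2 + 4 * (d + -Real.log ε), by positivity, fun M hM hdet => ⟨?_, sum_eig_aux M hM.1⟩⟩
  refine sum_log_aux d ε hε0 hε1 _ (fun j => hM.eigenvalues_pos j) ?_
  rw [hM.1.det_eq_prod_eigenvalues] at hdet
  exact hdet

end
end

section
/- Let (S, d_S) be a separable metric space with the Radon property and fix p ≥ 1. For p_0 ∈ [S]_p and a Borel probability measure ζ on [S]_p, let ρ[ζ] be the probability measure on S^∞ given by ρ[ζ](·) := ∫_{[S]_p} 𝔭^∞(·) ζ(d𝔭), and for n ≥ 0, m ≥ 1 let ẽ_{n,m} : S^∞ → [S] be the map ω ↦ (1/m) Σ_{i=1}^m δ_{ω_{i+n}}. Then for every m ∈ ℕ, d^{(p)}_{[[S]_p]}( ρ[ζ] ∘ ẽ_{n,m}^{−1}, p_0^∞ ∘ ẽ_{n,m}^{−1} ) ≤ d^{(p)}_{[[S]_p]}( ζ, δ_{p_0} ). -/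
open MeasureTheory ProbabilityTheory
open scoped ENNReal

noncomputable section

lemma corr_coupling {Ω S I : Type*} [MeasurableSpace Ω] [MeasurableSpace S]
    [Fintype I] [MeasurableSpace I] [MeasurableSingletonClass I]
    (κ : Kernel Ω S) [IsMarkovKernel κ] (τ : S → I) (hτ : Measurable τ)
    (p₀ : Measure S) [IsProbabilityMeasure p₀] (ν : I → Measure S) (hν : ∑ i, ν i = p₀)
    (η : ℝ≥0∞) (hη : η ≠ ∞) :
    ∃ K : Kernel Ω (S × S), IsMarkovKernel K ∧
      (∀ ω, (K ω).map Prod.fst = κ ω ∧ (K ω).map Prod.snd = p₀) ∧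
      ∀ ω, (∀ i, ν i Set.univ ≤ (1 + η) * κ ω (τ ⁻¹' {i})) →
        ∀ f : I → S → ℝ≥0∞, (∀ i, Measurable (f i)) →
          ∫⁻ z, f (τ z.1) z.2 ∂(K ω) ≤ ∑ i, ∫⁻ y, f i y ∂(ν i) + η * ∑ i, ∫⁻ y, f i y ∂p₀ := by
  classical
  set h : ℝ≥0∞ := 1 + η with hh
  have hh0 : h ≠ 0 := by simp [hh]
  have hht : h ≠ ∞ := by simp [hh, hη]
  set a : Ω → I → ℝ≥0∞ := fun ω i => κ ω (τ ⁻¹' {i}) with ha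
  have hpre : ∀ i, MeasurableSet (τ ⁻¹' {i}) := fun i => hτ (MeasurableSet.singleton i)
  have ham : ∀ i, Measurable (fun ω => a ω i) := fun i => Kernel.measurable_coe κ (hpre i)
  set q : I → ℝ≥0∞ := fun i => ν i Set.univ with hq
  have hq1 : ∑ i, q i = 1 := by
    have : (∑ i, ν i) Set.univ = 1 := by rw [hν]; simp
    simpa [hq] using this
  set D : Set Ω := {ω | ∀ i, q i ≤ h * a ω i} with hD
  have hDm : MeasurableSet D := by
    have : D = ⋂ i, {ω | q i ≤ h * a ω i} := by ext; simp [hD]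
    rw [this]
    exact MeasurableSet.iInter fun i => measurableSet_le measurable_const ((ham i).const_mul h)
  have hasum : ∀ ω, ∑ i, a ω i = 1 := by
    intro ω
    have h1 := lintegral_fintype (μ := (κ ω).map τ) (fun _ => (1 : ℝ≥0∞))
    rw [lintegral_map measurable_const hτ] at h1
    simp only [lintegral_const, measure_univ, one_mul] at h1
    rw [h1]
    exact Finset.sum_congr rfl fun i _ => by
      rw [Measure.map_apply hτ (MeasurableSet.singleton i)]
  set w : Ω → I → Measure S := fun ω i =>
    if ω ∈ D then h⁻¹ • ((a ω i)⁻¹ • ν i + (h - q i * (a ω i)⁻¹) • p₀) else p₀ with hw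
  have hqa : ∀ ω ∈ D, ∀ i, q i * (a ω i)⁻¹ ≤ h := by
    intro ω hω i
    rw [← ENNReal.div_eq_inv_mul.trans (mul_comm _ _)]
    exact ENNReal.div_le_of_le_mul (hω i)
  have hwp : ∀ ω i, IsProbabilityMeasure (w ω i) := by
    intro ω i
    constructor
    by_cases hω : ω ∈ D
    · simp only [hw, hω, if_true, Measure.smul_apply, Measure.add_apply, smul_eq_mul, measure_univ,
        mul_one]
      change h⁻¹ * ((a ω i)⁻¹ * q i + (h - q i * (a ω i)⁻¹)) = 1
      rw [mul_comm (a ω i)⁻¹, add_tsub_cancel_of_le (hqa ω hω i), ENNReal.inv_mul_cancel hh0 hht]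
    · simp [hw, hω]
  have hwm : Measurable (fun z : Ω × I => w z.1 z.2) := by
    refine measurable_from_prod_countable_left fun i => ?_
    simp only [hw]
    refine Measurable.ite hDm ?_ measurable_const
    refine Measure.measurable_of_measurable_coe _ fun B hB => ?_
    simp only [Measure.smul_apply, Measure.add_apply, smul_eq_mul]
    have := ham i
    fun_prop
  let wk : Kernel (Ω × S) S :=
    ⟨fun z => w z.1 (τ z.2), hwm.comp (measurable_fst.prodMk (hτ.comp measurable_snd))⟩
  have hwk : ∀ ω x, wk (ω, x) = w ω (τ x) := fun _ _ => rfl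
  have : IsMarkovKernel wk := ⟨fun z => hwp _ _⟩
  have key : ∀ ω, ∀ f : I → S → ℝ≥0∞, (∀ i, Measurable (f i)) →
      ∫⁻ z, f (τ z.1) z.2 ∂((κ ⊗ₖ wk) ω) = ∑ i, (∫⁻ y, f i y ∂(w ω i)) * a ω i := by
    intro ω f hf
    have hfm : Measurable (fun z : S × S => f (τ z.1) z.2) := by
      have : Measurable (fun z : I × S => f z.1 z.2) := measurable_from_prod_countable_right hf
      exact this.comp ((hτ.comp measurable_fst).prodMk measurable_snd)
    rw [Kernel.lintegral_compProd _ _ _ hfm]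
    simp only [hwk]
    have := lintegral_fintype (μ := (κ ω).map τ) (fun i => ∫⁻ y, f i y ∂(w ω i))
    rw [lintegral_map (measurable_of_finite _) hτ] at this
    rw [this]
    exact Finset.sum_congr rfl fun i _ => by
      rw [Measure.map_apply hτ (MeasurableSet.singleton i)]
  have key2 : ∀ ω ∈ D, ∀ f : I → S → ℝ≥0∞, ∀ i, (∫⁻ y, f i y ∂(w ω i)) * a ω i
      = h⁻¹ * (∫⁻ y, f i y ∂(ν i) + (h * a ω i - q i) * ∫⁻ y, f i y ∂p₀) := by
    intro ω hω f i
    simp only [hw, hω, if_true, lintegral_smul_measure, lintegral_add_measure, smul_eq_mul]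
    have hat : a ω i ≠ ∞ := measure_ne_top _ _
    by_cases ha0 : a ω i = 0
    · have hq0 : q i = 0 := by simpa [ha0] using hω i
      have : ν i = 0 := Measure.measure_univ_eq_zero.1 hq0
      simp [ha0, this]
    · rw [mul_assoc, add_mul, mul_right_comm, ENNReal.inv_mul_cancel ha0 hat, one_mul,
        mul_right_comm, ENNReal.sub_mul (fun _ _ => hat), mul_assoc (q i),
        ENNReal.inv_mul_cancel ha0 hat, mul_one]
  have hdef : ∀ ω ∈ D, ∑ i, (h * a ω i - q i) = η := by
    intro ω hω
    have h1 : ∑ i, (h * a ω i - q i) + ∑ i, q i = h := by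
      rw [← Finset.sum_add_distrib]
      simp_rw [tsub_add_cancel_of_le (hω _)]
      rw [← Finset.mul_sum, hasum, mul_one]
    rw [hq1, hh, add_comm] at h1
    exact (ENNReal.add_right_inj ENNReal.one_ne_top).1 h1
  refine ⟨κ ⊗ₖ wk, inferInstance, fun ω => ⟨?_, ?_⟩, ?_⟩
  · rw [← Kernel.fst_apply, Kernel.fst_compProd]
  · ext B hB
    rw [Measure.map_apply measurable_snd hB, ← lintegral_indicator_one (measurable_snd hB)]
    have := key ω (fun _ => B.indicator 1) (fun _ => measurable_one.indicator hB)
    have e : ∀ z : S × S, (Prod.snd ⁻¹' B).indicator (1 : S × S → ℝ≥0∞) z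
      = B.indicator (1 : S → ℝ≥0∞) z.2 := fun z => rfl
    simp_rw [e, this]
    by_cases hω : ω ∈ D
    · rw [Finset.sum_congr rfl fun i _ => key2 ω hω (fun _ => B.indicator 1) i]
      rw [← Finset.mul_sum, Finset.sum_add_distrib, ← Finset.sum_mul, hdef ω hω]
      simp_rw [lintegral_indicator_one hB]
      have : ∑ i, ν i B = p₀ B := by rw [← hν]; simp
      rw [this, ← one_add_mul, ← hh, ← mul_assoc, ENNReal.inv_mul_cancel hh0 hht, one_mul]
    · simp only [hw, hω, if_false]
      rw [← Finset.mul_sum, hasum, mul_one, lintegral_indicator_one hB]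
  · intro ω hω f hf
    rw [key ω f hf, Finset.sum_congr rfl fun i _ => key2 ω hω f i, ← Finset.mul_sum,
      Finset.sum_add_distrib]
    have h1 : h⁻¹ ≤ 1 := by rw [ENNReal.inv_le_one]; simp [hh]
    refine (mul_le_of_le_one_left zero_le h1).trans ?_
    gcongr
    rw [Finset.mul_sum]
    gcongr with i _
    rw [← hdef ω hω]
    exact Finset.single_le_sum (f := fun i => h * a ω i - q i) (fun _ _ => zero_le)
      (Finset.mem_univ i)

/-- The `p`-th power Wasserstein cost in `ℝ≥0∞`. -/
def ecostW {S : Type*} [MeasurableSpace S] [MetricSpace S] (p : ℝ) (μ ν : Measure S) : ℝ≥0∞ :=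
  ⨅ γ : {γ : Measure (S × S) // γ.map Prod.fst = μ ∧ γ.map Prod.snd = ν},
    ∫⁻ z, edist z.1 z.2 ^ p ∂γ.1

lemma ecostW_le {S : Type*} [MeasurableSpace S] [MetricSpace S] {p : ℝ} {μ ν : Measure S}
    (γ : Measure (S × S)) (h1 : γ.map Prod.fst = μ) (h2 : γ.map Prod.snd = ν) :
    ecostW p μ ν ≤ ∫⁻ z, edist z.1 z.2 ^ p ∂γ :=
  iInf_le (fun γ : {γ : Measure (S × S) // γ.map Prod.fst = μ ∧ γ.map Prod.snd = ν} =>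
    ∫⁻ z, edist z.1 z.2 ^ p ∂γ.1) ⟨γ, h1, h2⟩

lemma sel_family {Ω S : Type*} [MeasurableSpace Ω] [MetricSpace S] [SecondCountableTopology S]
    [MeasurableSpace S] [BorelSpace S] (p : ℝ) (hp : 1 ≤ p)
    (κ : Kernel Ω S) [IsMarkovKernel κ] (p₀ : Measure S) [IsProbabilityMeasure p₀] (x₀ : S)
    (hM0 : ∫⁻ y, edist y x₀ ^ p ∂p₀ ≠ ∞) :
    ∃ K : ℕ → Kernel Ω (S × S), (∀ j, IsMarkovKernel (K j)) ∧
      (∀ j ω, (K j ω).map Prod.fst = κ ω ∧ (K j ω).map Prod.snd = p₀) ∧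
      ∀ ω, ∫⁻ x, edist x x₀ ^ p ∂(κ ω) ≠ ∞ → ∀ L, ecostW p (κ ω) p₀ < L →
        ∃ j, ∫⁻ z, edist z.1 z.2 ^ p ∂(K j ω) ≤ L := by
  classical
  have hp0 : 0 < p := lt_of_lt_of_le one_pos hp
  have hne : Nonempty S := ⟨x₀⟩
  set e : ℕ → S := fun k => Nat.casesOn k x₀ (TopologicalSpace.denseSeq S) with he
  have hed : ∀ x, x ∈ closure (Set.range e) := by
    intro x
    have h1 := (TopologicalSpace.denseRange_denseSeq S).closure_eq
    have h2 : Set.range (TopologicalSpace.denseSeq S) ⊆ Set.range e := by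
      rintro _ ⟨k, rfl⟩; exact ⟨k + 1, rfl⟩
    exact closure_mono h2 (by rw [h1]; trivial)
  set τ : (N : ℕ) → S → Fin (N + 1) := fun N x =>
    ⟨SimpleFunc.nearestPtInd e N x, Nat.lt_succ_of_le (SimpleFunc.nearestPtInd_le e N x)⟩ with hτd
  have hτ : ∀ N, Measurable (τ N) := by
    intro N
    refine measurable_to_countable' fun i => ?_
    have : τ N ⁻¹' {i} = SimpleFunc.nearestPtInd e N ⁻¹' {i.1} := by
      ext x; simp [hτd, Fin.ext_iff]
    rw [this]
    exact SimpleFunc.measurableSet_fiber _ _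
  have hTe : ∀ N x, e (τ N x) = SimpleFunc.nearestPt e N x := fun N x => rfl
  have hidx : ∀ idx : (Σ N : ℕ, Fin (N + 1) → ℚ) × ℚ × ℕ, ∃ K : Kernel Ω (S × S),
      IsMarkovKernel K ∧ (∀ ω, (K ω).map Prod.fst = κ ω ∧ (K ω).map Prod.snd = p₀) ∧
      ∀ ω, (∀ i, ((Real.toNNReal (idx.1.2 i) : NNReal) : ℝ≥0∞)
          ≤ (1 + ((idx.2.2 + 1 : ℕ) : ℝ≥0∞)⁻¹) * κ ω (τ idx.1.1 ⁻¹' {i})) →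
        (∃ ν : Fin (idx.1.1 + 1) → Measure S, ∑ i, ν i = p₀ ∧
          (∀ i, ν i Set.univ ≤ ((Real.toNNReal (idx.1.2 i) : NNReal) : ℝ≥0∞)) ∧
          ∑ i, ∫⁻ y, edist (e i) y ^ p ∂(ν i) ≤ ((Real.toNNReal idx.2.1 : NNReal) : ℝ≥0∞)) →
        ∫⁻ z, edist (e (τ idx.1.1 z.1)) z.2 ^ p ∂(K ω) ≤
          ((Real.toNNReal idx.2.1 : NNReal) : ℝ≥0∞) +
            ((idx.2.2 + 1 : ℕ) : ℝ≥0∞)⁻¹ * ∑ i : Fin (idx.1.1 + 1), ∫⁻ y, edist (e i) y ^ p ∂p₀ := by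
    rintro ⟨⟨N, r⟩, c, j⟩
    dsimp only
    by_cases hex : ∃ ν : Fin (N + 1) → Measure S, ∑ i, ν i = p₀ ∧
          (∀ i, ν i Set.univ ≤ ((Real.toNNReal (r i) : NNReal) : ℝ≥0∞)) ∧
          ∑ i, ∫⁻ y, edist (e i) y ^ p ∂(ν i) ≤ ((Real.toNNReal c : NNReal) : ℝ≥0∞)
    · obtain ⟨ν, hν, hνr, hνc⟩ := hex
      obtain ⟨K, hK1, hK2, hK3⟩ := corr_coupling κ (τ N) (hτ N) p₀ ν hν
        (((j + 1 : ℕ) : ℝ≥0∞)⁻¹) (by simp)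
      refine ⟨K, hK1, hK2, fun ω hω _ => ?_⟩
      refine (hK3 ω (fun i => (hνr i).trans (hω i)) (fun i y => edist (e i) y ^ p)
        (fun i => by fun_prop)).trans ?_
      gcongr
    · refine ⟨κ ×ₖ (Kernel.const Ω p₀), inferInstance, fun ω => ?_, fun ω _ h => absurd h hex⟩
      rw [Kernel.prod_apply]
      simp
  choose KK hKK1 hKK2 hKK3 using hidx
  obtain ⟨s, hs⟩ := exists_surjective_nat ((Σ N : ℕ, Fin (N + 1) → ℚ) × ℚ × ℕ)
  refine ⟨fun j => KK (s j), fun j => hKK1 _, fun j => hKK2 _, fun ω hM L hL => ?_⟩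
  suffices h : ∃ idx, ∫⁻ z, edist z.1 z.2 ^ p ∂(KK idx ω) ≤ L by
    obtain ⟨idx, h⟩ := h
    obtain ⟨j, rfl⟩ := hs idx
    exact ⟨j, h⟩
  obtain ⟨⟨γ, hγ1, hγ2⟩, hγL⟩ := iInf_lt_iff.1 hL
  dsimp only at hγL
  set S1 : ℝ≥0∞ := (∫⁻ z, edist z.1 z.2 ^ p ∂γ) ^ (1 / p) with hS1
  have hlt : S1 < L ^ (1 / p) := ENNReal.rpow_lt_rpow hγL (by positivity)
  obtain ⟨u, hu1, hu2⟩ := exists_between hlt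
  set δ : ℕ → ℝ≥0∞ := fun N => (∫⁻ x, edist x (e (τ N x)) ^ p ∂(κ ω)) ^ (1 / p) with hδ
  have heτ : ∀ N, Measurable (fun x => e (τ N x)) := fun N =>
    (measurable_of_countable (fun i : Fin (N + 1) => e i)).comp (hτ N)
  have hδ0 : Filter.Tendsto δ Filter.atTop (nhds 0) := by
    have h1 : Filter.Tendsto (fun N => ∫⁻ x, edist x (e (τ N x)) ^ p ∂(κ ω)) Filter.atTop
        (nhds (∫⁻ _, 0 ∂(κ ω))) := by
      refine tendsto_lintegral_of_dominated_convergence (fun x => edist x x₀ ^ p)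
        (fun N => by have := heτ N; fun_prop) (fun N => ?_) hM ?_
      · refine Filter.Eventually.of_forall fun x => ?_
        dsimp only
        rw [edist_comm, edist_comm x]
        gcongr
        exact SimpleFunc.edist_nearestPt_le e x (Nat.zero_le N)
      · refine Filter.Eventually.of_forall fun x => ?_
        have h2 := SimpleFunc.tendsto_nearestPt (hed x)
        have h3 : Filter.Tendsto (fun N => edist x (e (τ N x))) Filter.atTop (nhds 0) := by
          have := (tendsto_const_nhds (x := x)).edist h2
          rw [edist_self] at this
          exact this
        have := (ENNReal.continuous_rpow_const (y := p)).tendsto 0 |>.comp h3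
        rw [ENNReal.zero_rpow_of_pos hp0] at this
        exact this
    have := (ENNReal.continuous_rpow_const (y := 1 / p)).tendsto _ |>.comp h1
    simp only [lintegral_zero] at this
    rw [ENNReal.zero_rpow_of_pos (by positivity)] at this
    exact this
  have ev1 : ∀ᶠ N in Filter.atTop, S1 + δ N < u := by
    have := (tendsto_const_nhds (x := S1)).add hδ0
    rw [add_zero] at this
    exact this.eventually_lt_const hu1
  have ev2 : ∀ᶠ N in Filter.atTop, δ N + u < L ^ (1 / p) := by
    have := hδ0.add (tendsto_const_nhds (x := u))
    rw [zero_add] at this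
    exact this.eventually_lt_const hu2
  obtain ⟨N, hN1, hN2⟩ := (ev1.and ev2).exists
  have hfst : ∀ g : S → ℝ≥0∞, Measurable g → ∀ γ' : Measure (S × S), γ'.map Prod.fst = κ ω →
      ∫⁻ z, g z.1 ∂γ' = ∫⁻ x, g x ∂(κ ω) := by
    intro g hg γ' h
    rw [← h, lintegral_map hg measurable_fst]
  -- the discretized cost of γ
  set ν : Fin (N + 1) → Measure S := fun i =>
    (γ.restrict (Prod.fst ⁻¹' (τ N ⁻¹' {i}))).map Prod.snd with hν
  have hset : ∀ i, MeasurableSet ((Prod.fst : S × S → S) ⁻¹' (τ N ⁻¹' {i})) := fun i =>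
    measurable_fst (hτ N (MeasurableSet.singleton i))
  have hsum : ∀ g : Fin (N + 1) → S → ℝ≥0∞, (∀ i, Measurable (g i)) →
      ∑ i, ∫⁻ y, g i y ∂(ν i) = ∫⁻ z, g (τ N z.1) z.2 ∂γ := by
    intro g hg
    have h1 : ∀ i, ∫⁻ y, g i y ∂(ν i)
        = ∫⁻ z in Prod.fst ⁻¹' (τ N ⁻¹' {i}), g (τ N z.1) z.2 ∂γ := by
      intro i
      rw [hν, lintegral_map (hg i) measurable_snd]
      refine setLIntegral_congr_fun (hset i) fun z hz => ?_
      have : τ N z.1 = i := hz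
      rw [this]
    simp_rw [h1]
    rw [← lintegral_biUnion_finset _ (fun i _ => hset i)]
    · have : (⋃ i ∈ (Finset.univ : Finset (Fin (N + 1))),
          (Prod.fst : S × S → S) ⁻¹' (τ N ⁻¹' {i})) = Set.univ := by
        ext z; simp
      rw [this, Measure.restrict_univ]
    · intro i _ j _ hij
      refine Set.disjoint_left.2 fun z hz hz' => hij ?_
      have h1 : τ N z.1 = i := hz
      have h2 : τ N z.1 = j := hz'
      exact h1.symm.trans h2
  have hνsum : ∑ i, ν i = p₀ := by
    ext B hB
    have := hsum (fun _ => B.indicator 1) (fun _ => measurable_one.indicator hB)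
    simp_rw [lintegral_indicator_one hB] at this
    rw [Measure.finsetSum_apply, this, ← hγ2, Measure.map_apply measurable_snd hB,
      ← lintegral_indicator_one (measurable_snd hB)]
    rfl
  have hνa : ∀ i, ν i Set.univ = κ ω (τ N ⁻¹' {i}) := by
    intro i
    rw [hν, Measure.map_apply measurable_snd MeasurableSet.univ, Set.preimage_univ,
      Measure.restrict_apply_univ, ← hγ1,
      Measure.map_apply measurable_fst (hτ N (MeasurableSet.singleton i))]
  have hcost : (∑ i, ∫⁻ y, edist (e i) y ^ p ∂(ν i)) < u ^ p := by
    rw [hsum (fun i y => edist (e i) y ^ p) (fun i => by fun_prop)]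
    have h1 : (∫⁻ z, edist (e (τ N z.1)) z.2 ^ p ∂γ) ^ (1 / p) ≤ δ N + S1 := by
      have h2 := ENNReal.lintegral_Lp_add_le (μ := γ) (p := p)
        (f := fun z => edist z.1 (e (τ N z.1))) (g := fun z => edist z.1 z.2)
        (by have := heτ N; fun_prop) (by fun_prop) hp
      rw [hfst (fun x => edist x (e (τ N x)) ^ p) (by have := heτ N; fun_prop) γ hγ1] at h2
      refine le_trans ?_ h2
      gcongr with z
      simp only [Pi.add_apply]
      rw [edist_comm z.1 (e _)]
      exact edist_triangle _ _ _
    have h3 : (∫⁻ z, edist (e (τ N z.1)) z.2 ^ p ∂γ) ^ (1 / p) < u := by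
      refine h1.trans_lt ?_
      rwa [add_comm]
    have := ENNReal.rpow_lt_rpow h3 hp0
    rwa [← ENNReal.rpow_mul, one_div_mul_cancel hp0.ne', ENNReal.rpow_one] at this
  obtain ⟨c, -, hc1, hc2⟩ := ENNReal.lt_iff_exists_rat_btwn.1 hcost
  set B : ℝ≥0∞ := ∑ i : Fin (N + 1), ∫⁻ y, edist (e i) y ^ p ∂p₀ with hB
  have hBt : B ≠ ∞ := by
    rw [hB]
    refine (ENNReal.sum_lt_top.2 fun i _ => ?_).ne
    have : ∀ y, edist (e i) y ^ p ≤ 2 ^ (p - 1) * (edist (e i) x₀ ^ p + edist y x₀ ^ p) := by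
      intro y
      refine le_trans ?_ (ENNReal.rpow_add_le_mul_rpow_add_rpow _ _ hp)
      gcongr
      rw [edist_comm y]
      exact edist_triangle _ _ _
    refine (lintegral_mono this).trans_lt ?_
    rw [lintegral_const_mul _ (by fun_prop), lintegral_add_left (by fun_prop)]
    simp only [lintegral_const, measure_univ, mul_one]
    refine ENNReal.mul_lt_top (ENNReal.rpow_lt_top_of_nonneg (by linarith) (by simp)) ?_
    exact ENNReal.add_lt_top.2 ⟨ENNReal.rpow_lt_top_of_nonneg hp0.le (edist_ne_top _ _),
      hM0.lt_top⟩
  have ev3 : ∀ᶠ j : ℕ in Filter.atTop,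
      ((Real.toNNReal c : NNReal) : ℝ≥0∞) + ((j + 1 : ℕ) : ℝ≥0∞)⁻¹ * B < u ^ p := by
    have h1 : Filter.Tendsto (fun j : ℕ => ((j + 1 : ℕ) : ℝ≥0∞)⁻¹) Filter.atTop (nhds 0) :=
      ENNReal.tendsto_inv_nat_nhds_zero.comp (Filter.tendsto_add_atTop_nat 1)
    have h2 := ENNReal.Tendsto.mul_const h1 (Or.inr hBt)
    have h3 := (tendsto_const_nhds (x := ((Real.toNNReal c : NNReal) : ℝ≥0∞))).add h2
    rw [zero_mul, add_zero] at h3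
    exact h3.eventually_lt_const hc2
  obtain ⟨j, hj⟩ := ev3.exists
  have hr : ∀ i : Fin (N + 1), ∃ r : ℚ, κ ω (τ N ⁻¹' {i}) ≤ ((Real.toNNReal r : NNReal) : ℝ≥0∞) ∧
      ((Real.toNNReal r : NNReal) : ℝ≥0∞) ≤
        (1 + ((j + 1 : ℕ) : ℝ≥0∞)⁻¹) * κ ω (τ N ⁻¹' {i}) := by
    intro i
    by_cases h0 : κ ω (τ N ⁻¹' {i}) = 0
    · exact ⟨0, by simp [h0]⟩
    · have : κ ω (τ N ⁻¹' {i}) < (1 + ((j + 1 : ℕ) : ℝ≥0∞)⁻¹) * κ ω (τ N ⁻¹' {i}) := by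
        rw [add_mul, one_mul]
        refine ENNReal.lt_add_right (measure_ne_top _ _) ?_
        refine mul_ne_zero ?_ h0
        exact ENNReal.inv_ne_zero.2 (ENNReal.natCast_ne_top _)
      obtain ⟨r, -, h1, h2⟩ := ENNReal.lt_iff_exists_rat_btwn.1 this
      exact ⟨r, h1.le, h2.le⟩
  choose r hr1 hr2 using hr
  have hK := hKK3 ⟨⟨N, r⟩, c, j⟩ ω hr2 ⟨ν, hνsum, fun i => (hνa i).le.trans (hr1 i), hc1.le⟩
  refine ⟨⟨⟨N, r⟩, c, j⟩, ?_⟩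
  dsimp only at hK
  set K := KK ⟨⟨N, r⟩, c, j⟩ ω with hKd
  have h2 := ENNReal.lintegral_Lp_add_le (μ := K) (p := p)
    (f := fun z => edist z.1 (e (τ N z.1))) (g := fun z => edist (e (τ N z.1)) z.2)
    (by have := heτ N; fun_prop) (by have := heτ N; fun_prop) hp
  rw [hfst (fun x => edist x (e (τ N x)) ^ p) (by have := heτ N; fun_prop) K (hKK2 _ ω).1] at h2
  have h3 : (∫⁻ z, edist (e (τ N z.1)) z.2 ^ p ∂K) ^ (1 / p) ≤ u := by
    have := ENNReal.rpow_le_rpow (hK.trans hj.le) (z := 1 / p) (by positivity)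
    rwa [← ENNReal.rpow_mul, mul_one_div_cancel hp0.ne', ENNReal.rpow_one] at this
  have h4 : (∫⁻ z, edist z.1 z.2 ^ p ∂K) ^ (1 / p) ≤ L ^ (1 / p) := by
    refine le_trans ?_ ((h2.trans (add_le_add le_rfl h3)).trans hN2.le)
    gcongr with z
    exact edist_triangle _ _ _
  exact (ENNReal.rpow_le_rpow_iff (by positivity)).1 h4

lemma sel_kernel {Ω S : Type*} [MeasurableSpace Ω] [MetricSpace S] [SecondCountableTopology S]
    [MeasurableSpace S] [BorelSpace S] (p : ℝ) (hp : 1 ≤ p)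
    (κ : Kernel Ω S) [IsMarkovKernel κ] (p₀ : Measure S) [IsProbabilityMeasure p₀] (x₀ : S)
    (hM0 : ∫⁻ y, edist y x₀ ^ p ∂p₀ ≠ ∞) :
    (∃ g : Ω → ℝ≥0∞, Measurable g ∧
      ∀ ω, ∫⁻ x, edist x x₀ ^ p ∂(κ ω) ≠ ∞ → ecostW p (κ ω) p₀ = g ω) ∧
    ∀ δ : ℝ≥0∞, δ ≠ 0 → ∃ K : Kernel Ω (S × S), IsMarkovKernel K ∧
      (∀ ω, (K ω).map Prod.fst = κ ω ∧ (K ω).map Prod.snd = p₀) ∧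
      ∀ ω, ∫⁻ x, edist x x₀ ^ p ∂(κ ω) ≠ ∞ →
        ∫⁻ z, edist z.1 z.2 ^ p ∂(K ω) ≤ ecostW p (κ ω) p₀ + δ := by
  classical
  obtain ⟨K, hK1, hK2, hK3⟩ := sel_family p hp κ p₀ x₀ hM0
  set c : ℕ → Ω → ℝ≥0∞ := fun j ω => ∫⁻ z, edist z.1 z.2 ^ p ∂(K j ω) with hc
  have hcm : ∀ j, Measurable (c j) := fun j =>
    (Measure.measurable_lintegral (by fun_prop)).comp (K j).measurable
  have hgm : Measurable (fun ω => ⨅ j, c j ω) := Measurable.iInf hcm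
  have hg : ∀ ω, ∫⁻ x, edist x x₀ ^ p ∂(κ ω) ≠ ∞ → ecostW p (κ ω) p₀ = ⨅ j, c j ω := by
    intro ω hω
    apply le_antisymm
    · exact le_iInf fun j => ecostW_le _ (hK2 j ω).1 (hK2 j ω).2
    · refine le_of_forall_gt_imp_ge_of_dense fun L hL => ?_
      obtain ⟨j, hj⟩ := hK3 ω hω L hL
      exact (iInf_le _ j).trans hj
  refine ⟨⟨_, hgm, hg⟩, fun δ hδ => ?_⟩
  have hex : ∀ ω, ∃ j, c j ω ≤ (⨅ j, c j ω) + δ := by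
    intro ω
    by_cases ht : (⨅ j, c j ω) = ∞
    · exact ⟨0, by simp [ht]⟩
    · obtain ⟨j, hj⟩ := iInf_lt_iff.1 (ENNReal.lt_add_right ht hδ)
      exact ⟨j, hj.le⟩
  let K' : Kernel Ω (S × S) := ⟨fun ω => K (Nat.find (hex ω)) ω,
    Measurable.find (f := fun j ω => K j ω) (p := fun j ω => c j ω ≤ (⨅ j, c j ω) + δ)
      (fun j => (K j).measurable)
      (fun j => measurableSet_le (hcm j) (hgm.add_const δ)) hex⟩
  have hK' : ∀ ω, K' ω = K (Nat.find (hex ω)) ω := fun _ => rfl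
  refine ⟨K', ⟨fun ω => ?_⟩, fun ω => ?_, fun ω hω => ?_⟩
  · rw [hK']
    have := hK1 (Nat.find (hex ω))
    infer_instance
  · rw [hK']; exact hK2 _ ω
  · rw [hK', hg ω hω]
    exact Nat.find_spec (hex ω)

lemma integral_le_of_lint {X : Type*} [MeasurableSpace X] {μ : Measure X} {f : X → ℝ}
    (hf : ∀ x, 0 ≤ f x) {c : ℝ} (hc : 0 ≤ c)
    (h : ∫⁻ x, ENNReal.ofReal (f x) ∂μ ≤ ENNReal.ofReal c) : ∫ x, f x ∂μ ≤ c := by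
  by_cases hm : AEStronglyMeasurable f μ
  · rw [integral_eq_lintegral_of_nonneg_ae (Filter.Eventually.of_forall hf) hm]
    exact ENNReal.toReal_le_of_le_ofReal hc h
  · rw [integral_undef (fun h => hm h.1)]; exact hc

lemma edist_rpow_eq {S : Type*} [MetricSpace S] {p : ℝ} (hp : 0 ≤ p) (x y : S) :
    edist x y ^ p = ENNReal.ofReal (dist x y ^ p) := by
  rw [edist_dist, ENNReal.ofReal_rpow_of_nonneg dist_nonneg hp]

lemma edist_rpow_le {S : Type*} [MetricSpace S] {p : ℝ} (hp : 1 ≤ p) (x y z : S) :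
    edist x z ^ p ≤ 2 ^ (p - 1) * (edist x y ^ p + edist y z ^ p) := by
  refine le_trans ?_ (ENNReal.rpow_add_le_mul_rpow_add_rpow _ _ hp)
  gcongr
  exact edist_triangle _ _ _

lemma two_rpow_ne_top {p : ℝ} (hp : 1 ≤ p) : (2 : ℝ≥0∞) ^ (p - 1) ≠ ∞ :=
  (ENNReal.rpow_lt_top_of_nonneg (by linarith) (by simp)).ne

section
variable {S : Type*} [MetricSpace S] [SecondCountableTopology S]
  [MeasurableSpace S] [BorelSpace S]

lemma memWp_moment {p : ℝ} (hp : 1 ≤ p) {𝔭 : Measure S} (h : MemWp p 𝔭) (x₀ : S) :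
    ∫⁻ x, edist x x₀ ^ p ∂𝔭 ≠ ∞ := by
  obtain ⟨h1, x₁, h2⟩ := h
  have h3 : ∫⁻ x, edist x x₁ ^ p ∂𝔭 < ∞ := by
    simp_rw [edist_rpow_eq (show (0 : ℝ) ≤ p by linarith)]
    exact h2.lintegral_lt_top
  refine ((lintegral_mono fun x => edist_rpow_le hp x x₁ x₀).trans_lt ?_).ne
  rw [lintegral_const_mul _ (by fun_prop), lintegral_add_left (by fun_prop)]
  simp only [lintegral_const, measure_univ, mul_one]
  exact ENNReal.mul_lt_top (two_rpow_ne_top hp).lt_top (ENNReal.add_lt_top.2 ⟨h3,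
    ENNReal.rpow_lt_top_of_nonneg (by linarith) (edist_ne_top _ _)⟩)

lemma cost_coupling_le {p : ℝ} (hp : 1 ≤ p) {μ ν : Measure S} (x₀ : S) (γ : Measure (S × S))
    (h1 : γ.map Prod.fst = μ) (h2 : γ.map Prod.snd = ν) :
    ∫⁻ z, edist z.1 z.2 ^ p ∂γ ≤
      2 ^ (p - 1) * (∫⁻ x, edist x x₀ ^ p ∂μ + ∫⁻ x, edist x x₀ ^ p ∂ν) := by
  rw [← h1, ← h2, lintegral_map (by fun_prop) measurable_fst,
    lintegral_map (by fun_prop) measurable_snd, ← lintegral_add_left (by fun_prop),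
    ← lintegral_const_mul _ (by fun_prop)]
  refine lintegral_mono fun z => ?_
  rw [edist_comm z.2]
  exact edist_rpow_le hp _ _ _

lemma moment_le_coupling {p : ℝ} (hp : 1 ≤ p) {μ ν : Measure S} (x₀ : S) (γ : Measure (S × S))
    (h1 : γ.map Prod.fst = μ) (h2 : γ.map Prod.snd = ν) :
    ∫⁻ x, edist x x₀ ^ p ∂μ ≤
      2 ^ (p - 1) * (∫⁻ z, edist z.1 z.2 ^ p ∂γ + ∫⁻ x, edist x x₀ ^ p ∂ν) := by
  rw [← h1, ← h2, lintegral_map (by fun_prop) measurable_fst,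
    lintegral_map (by fun_prop) measurable_snd, ← lintegral_add_left (by fun_prop),
    ← lintegral_const_mul _ (by fun_prop)]
  exact lintegral_mono fun z => edist_rpow_le hp _ _ _

lemma ecostW_le_moment {p : ℝ} (hp : 1 ≤ p) (μ ν : Measure S) [IsProbabilityMeasure μ]
    [IsProbabilityMeasure ν] (x₀ : S) :
    ecostW p μ ν ≤ 2 ^ (p - 1) * (∫⁻ x, edist x x₀ ^ p ∂μ + ∫⁻ x, edist x x₀ ^ p ∂ν) :=
  (ecostW_le (μ.prod ν) (by simp) (by simp)).trans
    (cost_coupling_le hp x₀ (μ.prod ν) (by simp) (by simp))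

lemma moment_le_ecostW {p : ℝ} (hp : 1 ≤ p) (μ ν : Measure S) [IsProbabilityMeasure μ]
    [IsProbabilityMeasure ν] (x₀ : S) :
    ∫⁻ x, edist x x₀ ^ p ∂μ ≤ 2 ^ (p - 1) * (ecostW p μ ν + ∫⁻ x, edist x x₀ ^ p ∂ν) := by
  have : Nonempty {γ : Measure (S × S) // γ.map Prod.fst = μ ∧ γ.map Prod.snd = ν} :=
    ⟨⟨μ.prod ν, by simp, by simp⟩⟩
  rw [ecostW, ENNReal.iInf_add, ENNReal.mul_iInf_of_ne (by simp) (two_rpow_ne_top hp)]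
  exact le_iInf fun γ => moment_le_coupling hp x₀ γ.1 γ.2.1 γ.2.2

lemma wassW_dist_nonneg (p : ℝ) (μ ν : Measure S) : 0 ≤ wassW (fun u v => dist u v) p μ ν := by
  refine Real.sInf_nonneg ?_
  rintro _ ⟨γ, -, -, rfl⟩
  exact Real.rpow_nonneg (integral_nonneg fun z => Real.rpow_nonneg dist_nonneg _) _

lemma wassW_eq {p : ℝ} (hp : 1 ≤ p) (μ ν : Measure S) [IsProbabilityMeasure μ]
    [IsProbabilityMeasure ν] (x₀ : S) (hμ : ∫⁻ x, edist x x₀ ^ p ∂μ ≠ ∞)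
    (hν : ∫⁻ x, edist x x₀ ^ p ∂ν ≠ ∞) :
    ENNReal.ofReal (wassW (fun u v => dist u v) p μ ν ^ p) = ecostW p μ ν := by
  have hp0 : 0 < p := by linarith
  have hnn : ∀ γ : Measure (S × S), 0 ≤ ∫ z, dist z.1 z.2 ^ p ∂γ := fun γ =>
    integral_nonneg fun z => Real.rpow_nonneg dist_nonneg _
  have hfin : ∀ γ : Measure (S × S), γ.map Prod.fst = μ → γ.map Prod.snd = ν →
      ∫⁻ z, edist z.1 z.2 ^ p ∂γ = ENNReal.ofReal (∫ z, dist z.1 z.2 ^ p ∂γ) := by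
    intro γ h1 h2
    have h3 : ∫⁻ z, edist z.1 z.2 ^ p ∂γ < ∞ := (cost_coupling_le hp x₀ γ h1 h2).trans_lt
      (ENNReal.mul_lt_top (two_rpow_ne_top hp).lt_top
        (ENNReal.add_lt_top.2 ⟨hμ.lt_top, hν.lt_top⟩))
    simp_rw [edist_rpow_eq hp0.le] at h3 ⊢
    rw [ofReal_integral_eq_lintegral_ofReal]
    · refine ⟨Measurable.aestronglyMeasurable (by fun_prop), ?_⟩
      rw [hasFiniteIntegral_iff_ofReal]
      · exact h3
      · exact Filter.Eventually.of_forall fun z => Real.rpow_nonneg dist_nonneg _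
    · exact Filter.Eventually.of_forall fun z => Real.rpow_nonneg dist_nonneg _
  have hbdd : BddBelow {r : ℝ | ∃ γ : Measure (S × S), γ.map Prod.fst = μ ∧ γ.map Prod.snd = ν ∧
      r = (∫ z, dist z.1 z.2 ^ p ∂γ) ^ (1 / p)} := by
    refine ⟨0, ?_⟩
    rintro _ ⟨γ, -, -, rfl⟩
    exact Real.rpow_nonneg (hnn γ) _
  apply le_antisymm
  · refine le_iInf ?_
    rintro ⟨γ, h1, h2⟩
    dsimp only
    rw [hfin γ h1 h2]
    refine ENNReal.ofReal_le_ofReal ?_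
    have h3 : wassW (fun u v => dist u v) p μ ν ≤ (∫ z, dist z.1 z.2 ^ p ∂γ) ^ (1 / p) :=
      csInf_le hbdd ⟨γ, h1, h2, rfl⟩
    have h4 := Real.rpow_le_rpow (wassW_dist_nonneg p μ ν) h3 hp0.le
    rwa [← Real.rpow_mul (hnn γ), one_div_mul_cancel hp0.ne', Real.rpow_one] at h4
  · have hEt : ecostW p μ ν ≠ ∞ := ((ecostW_le_moment hp μ ν x₀).trans_lt
      (ENNReal.mul_lt_top (two_rpow_ne_top hp).lt_top
        (ENNReal.add_lt_top.2 ⟨hμ.lt_top, hν.lt_top⟩))).ne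
    rw [← ENNReal.ofReal_toReal hEt]
    refine ENNReal.ofReal_le_ofReal ?_
    have h3 : (ecostW p μ ν).toReal ^ (1 / p) ≤ wassW (fun u v => dist u v) p μ ν := by
      refine le_csInf ⟨_, μ.prod ν, by simp, by simp, rfl⟩ ?_
      rintro _ ⟨γ, h1, h2, rfl⟩
      refine Real.rpow_le_rpow ENNReal.toReal_nonneg ?_ (by positivity)
      refine ENNReal.toReal_le_of_le_ofReal (hnn γ) ?_
      rw [← hfin γ h1 h2]
      exact ecostW_le γ h1 h2
    have h4 := Real.rpow_le_rpow (by positivity) h3 hp0.le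
    rwa [← Real.rpow_mul ENNReal.toReal_nonneg, one_div_mul_cancel hp0.ne', Real.rpow_one] at h4

end

/-- empirical measure of a finite block -/
def empF {S : Type*} [MeasurableSpace S] (m : ℕ) (v : Fin m → S) : Measure S :=
  (m : ℝ≥0∞)⁻¹ • ∑ i, Measure.dirac (v i)

section
variable {S : Type*} [MeasurableSpace S]

lemma empShift_eq (n m : ℕ) (ω : ℕ → S) : empShift n m ω = empF m (fun i => ω (i + n)) := by
  rw [empShift, empF, Finset.sum_range]

lemma empF_map {T : Type*} [MeasurableSpace T] (m : ℕ) (v : Fin m → S) {f : S → T}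
    (hf : Measurable f) : (empF m v).map f = empF m (fun i => f (v i)) := by
  ext B hB
  rw [Measure.map_apply hf hB]
  simp [empF, Measure.dirac_apply' _ hB, Measure.dirac_apply' _ (hf hB), Measure.finsetSum_apply]
  rfl

lemma empF_lintegral (m : ℕ) (v : Fin m → S) {f : S → ℝ≥0∞} (hf : Measurable f) :
    ∫⁻ x, f x ∂(empF m v) = (m : ℝ≥0∞)⁻¹ * ∑ i, f (v i) := by
  simp [empF, lintegral_finsetSum_measure, lintegral_dirac' _ hf]

lemma empF_prob {m : ℕ} (hm : 1 ≤ m) (v : Fin m → S) : IsProbabilityMeasure (empF m v) := by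
  constructor
  have : (m : ℝ≥0∞) ≠ 0 := by exact_mod_cast (by omega : m ≠ 0)
  simp [empF, ENNReal.inv_mul_cancel this (ENNReal.natCast_ne_top m)]

lemma empF_measurable (m : ℕ) : Measurable (empF (S := S) m) := by
  refine Measure.measurable_of_measurable_coe _ fun B hB => ?_
  simp only [empF, Measure.smul_apply, Measure.finsetSum_apply, smul_eq_mul,
    Measure.dirac_apply' _ hB]
  have : Measurable (B.indicator (1 : S → ℝ≥0∞)) := measurable_one.indicator hB
  fun_prop

lemma empShift_measurable (n m : ℕ) : Measurable (empShift (S := S) n m) := by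
  have : empShift (S := S) n m = empF m ∘ (fun ω (i : Fin m) => ω (i + n)) := by
    ext1 ω; exact empShift_eq n m ω
  rw [this]
  exact (empF_measurable m).comp (by fun_prop)

lemma iid_block (μ : Measure (ℕ → S)) (𝔭 : Measure S) [IsProbabilityMeasure 𝔭]
    (h : ∀ (n : ℕ) (A : Fin n → Set S), (∀ i, MeasurableSet (A i)) →
          μ {ω | ∀ i : Fin n, ω (i : ℕ) ∈ A i} = ∏ i, 𝔭 (A i)) (n m : ℕ) :
    μ.map (empShift n m) = (Measure.pi (fun _ : Fin m => 𝔭)).map (empF m) := by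
  have h1 : Measure.pi (fun _ : Fin m => 𝔭) = μ.map (fun ω (i : Fin m) => ω (i + n)) := by
    refine Measure.pi_eq fun s hs => ?_
    rw [Measure.map_apply (by fun_prop) (MeasurableSet.univ_pi hs)]
    have h2 := h (n + m) (Fin.addCases (fun _ => Set.univ) s) (by
      intro i
      refine Fin.addCases (fun i => ?_) (fun i => ?_) i
      · simp
      · simpa using hs i)
    rw [Fin.prod_univ_add] at h2
    simp only [Fin.addCases_left, Fin.addCases_right, measure_univ, Finset.prod_const_one,
      one_mul] at h2
    rw [← h2]
    congr 1
    ext ω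
    simp only [Set.mem_preimage, Set.mem_pi, Set.mem_univ, true_implies, Set.mem_ofPred_eq]
    constructor
    · intro H i
      refine Fin.addCases (fun i => ?_) (fun i => ?_) i
      · simp
      · simpa [add_comm] using H i
    · intro H i
      simpa [add_comm] using H (Fin.natAdd n i)
  rw [h1, Measure.map_map (empF_measurable m) (by fun_prop)]
  congr 1
  ext1 ω; exact empShift_eq n m ω

end

lemma map_bind_meas {α β δ : Type*} [MeasurableSpace α] [MeasurableSpace β] [MeasurableSpace δ]
    (μ : Measure α) {f : α → Measure β} (hf : Measurable f) {g : β → δ} (hg : Measurable g) :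
    (μ.bind f).map g = μ.bind (fun a => (f a).map g) := by
  ext B hB
  rw [Measure.map_apply hg hB, Measure.bind_apply (hg hB) hf.aemeasurable,
    Measure.bind_apply hB (f := fun a => (f a).map g)
      ((Measure.measurable_map g hg).comp hf).aemeasurable]
  simp_rw [Measure.map_apply hg hB]

lemma measurable_pi_kernel {Ω X : Type*} [MeasurableSpace Ω] [MeasurableSpace X]
    (K : Kernel Ω X) [IsMarkovKernel K] (m : ℕ) :
    Measurable (fun ω => Measure.pi (fun _ : Fin m => K ω)) := by
  refine Measurable.measure_of_isPiSystem_of_isProbabilityMeasure generateFrom_pi.symm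
    isPiSystem_pi ?_
  rintro _ ⟨s, hs, rfl⟩
  simp_rw [Measure.pi_pi]
  refine Finset.measurable_prod _ fun i _ => ?_
  exact Kernel.measurable_coe K (hs i trivial)

lemma ae_eq_of_map_dirac {X S : Type*} [MeasurableSpace X] [MeasurableSpace S]
    [MeasurableSpace.CountablyGenerated S] (γ : Measure X) (f : X → Measure S) (hf : Measurable f)
    (p₀ : Measure S) [IsProbabilityMeasure p₀] (h : γ.map f = Measure.dirac p₀) :
    ∀ᵐ z ∂γ, f z = p₀ := by
  obtain ⟨b, hbc, hbg⟩ := MeasurableSpace.CountablyGenerated.isCountablyGenerated (α := S)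
  set C := generateSetAlgebra b with hC
  have hCc : C.Countable := countable_generateSetAlgebra hbc
  have hCg : ‹MeasurableSpace S› = MeasurableSpace.generateFrom C := by
    rw [hC, generateFrom_generateSetAlgebra_eq, hbg]
  have hCpi : IsPiSystem C := fun s hs t ht _ => isSetAlgebra_generateSetAlgebra.inter_mem hs ht
  have hCm : ∀ s ∈ C, MeasurableSet s := fun s hs => by
    rw [hCg]; exact MeasurableSpace.measurableSet_generateFrom hs
  have h1 : ∀ s, MeasurableSet s → ∀ᵐ z ∂γ, f z s = p₀ s := by
    intro s hs
    have hms : MeasurableSet {μ : Measure S | μ s = p₀ s} :=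
      measurableSet_eq_fun (Measure.measurable_coe hs) measurable_const
    have : ∀ᵐ μ ∂(γ.map f), μ s = p₀ s := by
      rw [h, ae_dirac_iff hms]
    exact (ae_map_iff hf.aemeasurable hms).1 this
  have h2 : ∀ᵐ z ∂γ, ∀ s ∈ C, f z s = p₀ s := (ae_ball_iff hCc).2 fun s hs => h1 s (hCm s hs)
  filter_upwards [h2, h1 _ MeasurableSet.univ] with z hz hzu
  exact (ext_of_generate_finite C hCg hCpi (fun s hs => (hz s hs).symm) hzu.symm).symm

/-- contraction of the Wasserstein distance under the empirical map:
`d^{(p)}_{[[S]_p]}( ρ[ζ] ∘ ẽ_{n,m}⁻¹, p₀^∞ ∘ ẽ_{n,m}⁻¹ ) ≤ d^{(p)}_{[[S]_p]}( ζ, δ_{p₀} )`,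
where `ρ[ζ] = ∫ 𝔭^∞ ζ(d𝔭)`. -/
theorem mixture_empirical_wasserstein_contraction
    {S : Type*} [MetricSpace S] [TopologicalSpace.SeparableSpace S]
    [MeasurableSpace S] [BorelSpace S]
    (hRadon : ∀ μ : Measure S, IsProbabilityMeasure μ → μ.InnerRegular)
    (p : ℝ) (hp : 1 ≤ p)
    -- the product-measure map `𝔭 ↦ 𝔭^∞`
    (iid : Measure S → Measure (ℕ → S)) (hiid_meas : Measurable iid)
    (hiid : ∀ 𝔭 : Measure S, IsProbabilityMeasure 𝔭 →
      IsProbabilityMeasure (iid 𝔭) ∧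
        ∀ (n : ℕ) (A : Fin n → Set S), (∀ i, MeasurableSet (A i)) →
          iid 𝔭 {ω | ∀ i : Fin n, ω (i : ℕ) ∈ A i} = ∏ i, 𝔭 (A i))
    (p₀ : Measure S) (hp₀ : MemWp p p₀)
    (ζ : Measure (Measure S)) (hζ : IsProbabilityMeasure ζ)
    (hζp : ∀ᵐ 𝔭 ∂ζ, MemWp p 𝔭)
    (n m : ℕ) (hm : 1 ≤ m) :
    wassW (fun μ ν => wassW (fun u v => dist u v) p μ ν) p
        ((ζ.bind iid).map (empShift n m)) ((iid p₀).map (empShift n m))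
      ≤ wassW (fun μ ν => wassW (fun u v => dist u v) p μ ν) p ζ (Measure.dirac p₀) := by
  classical
  have : SecondCountableTopology S := UniformSpace.secondCountable_of_separable S
  have hp0 : 0 < p := by linarith
  have hp₀P : IsProbabilityMeasure p₀ := hp₀.1
  obtain ⟨x₀, -⟩ := id hp₀.2
  have hM0 := memWp_moment hp hp₀ x₀
  set F : Measure S → Measure S → ℝ := fun μ ν => wassW (fun u v => dist u v) p μ ν with hF
  have hFnn : ∀ μ ν, 0 ≤ F μ ν := fun μ ν => wassW_dist_nonneg p μ ν
  have hFp : ∀ μ ν, 0 ≤ F μ ν ^ p := fun μ ν => Real.rpow_nonneg (hFnn μ ν) p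
  set M : Measure S → ℝ≥0∞ := fun μ => ∫⁻ x, edist x x₀ ^ p ∂μ with hM
  have hMm : Measurable M := Measure.measurable_lintegral (by fun_prop)
  -- the identity kernel, corrected off the probability measures
  have hPm : MeasurableSet {μ : Measure S | μ Set.univ = 1} :=
    measurableSet_eq_fun (Measure.measurable_coe MeasurableSet.univ) measurable_const
  let κ : Kernel (Measure S) S := ⟨fun μ => if μ Set.univ = 1 then μ else p₀,
    Measurable.ite hPm measurable_id measurable_const⟩
  have hκd : ∀ μ, κ μ = if μ Set.univ = 1 then μ else p₀ := fun _ => rfl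
  have hκM : IsMarkovKernel κ := by
    refine ⟨fun μ => ?_⟩
    rw [hκd]
    split_ifs with h
    · exact ⟨h⟩
    · exact hp₀P
  have hκ : ∀ μ : Measure S, IsProbabilityMeasure μ → κ μ = μ := fun μ h => by
    rw [hκd, if_pos h.measure_univ]
  obtain ⟨⟨g, hgm, hg⟩, hsel⟩ := sel_kernel p hp κ p₀ x₀ hM0
  have hζ1 : ∀ᵐ 𝔭 ∂ζ, IsProbabilityMeasure 𝔭 ∧ M 𝔭 ≠ ∞ := by
    filter_upwards [hζp] with 𝔭 h
    exact ⟨h.1, memWp_moment hp h x₀⟩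
  have hζg : ∀ᵐ 𝔭 ∂ζ, ENNReal.ofReal (F 𝔭 p₀ ^ p) = g 𝔭 := by
    filter_upwards [hζ1] with 𝔭 h
    have := h.1
    rw [← hg 𝔭 (by rw [hκ 𝔭 h.1]; exact h.2), hκ 𝔭 h.1]
    exact wassW_eq hp 𝔭 p₀ x₀ h.2 hM0
  have hFm : AEStronglyMeasurable (fun 𝔭 => F 𝔭 p₀ ^ p) ζ := by
    refine ⟨fun 𝔭 => (g 𝔭).toReal, hgm.ennreal_toReal.stronglyMeasurable, ?_⟩
    filter_upwards [hζg] with 𝔭 h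
    rw [← h, ENNReal.toReal_ofReal (hFp _ _)]
  set R : ℝ := ∫ 𝔭, F 𝔭 p₀ ^ p ∂ζ with hR
  have hR0 : 0 ≤ R := integral_nonneg fun 𝔭 => hFp _ _
  -- law of empirical measures
  have hlaw : ∀ 𝔭 : Measure S, IsProbabilityMeasure 𝔭 → (iid 𝔭).map (empShift n m)
      = (Measure.pi (fun _ : Fin m => 𝔭)).map (empF m) := fun 𝔭 h =>
    iid_block (iid 𝔭) 𝔭 (hiid 𝔭 h).2 n m
  have hpi : ∀ (𝔭 : Measure S) (_ : IsProbabilityMeasure 𝔭),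
      ∫⁻ v, M (empF m v) ∂(Measure.pi (fun _ : Fin m => 𝔭)) = M 𝔭 := by
    intro 𝔭 h
    simp only [hM]
    simp_rw [empF_lintegral m _ (f := fun x => edist x x₀ ^ p) (by fun_prop)]
    rw [lintegral_const_mul _ (by fun_prop), lintegral_finsetSum _ (fun i _ => by fun_prop)]
    have h1 : ∀ i : Fin m, ∫⁻ v, edist (v i) x₀ ^ p ∂(Measure.pi (fun _ : Fin m => 𝔭))
        = ∫⁻ x, edist x x₀ ^ p ∂𝔭 := fun i =>
      (measurePreserving_eval (fun _ : Fin m => 𝔭) i).lintegral_comp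
        (f := fun x => edist x x₀ ^ p) (by fun_prop)
    simp_rw [h1]
    have hm0 : (m : ℝ≥0∞) ≠ 0 := by exact_mod_cast (by omega : m ≠ 0)
    simp [← mul_assoc, ENNReal.inv_mul_cancel hm0 (ENNReal.natCast_ne_top m)]
  have hMemp : ∀ v : Fin m → S, M (empF m v) ≠ ∞ := by
    intro v
    simp only [hM]
    rw [empF_lintegral m v (f := fun x => edist x x₀ ^ p) (by fun_prop)]
    refine ENNReal.mul_ne_top (by simp; omega) ?_
    exact (ENNReal.sum_lt_top.2 fun i _ =>
      ENNReal.rpow_lt_top_of_nonneg hp0.le (edist_ne_top _ _)).ne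
  have hE := empShift_measurable (S := S) n m
  have hμ₁ : (ζ.bind iid).map (empShift n m) = ζ.bind (fun 𝔭 => (iid 𝔭).map (empShift n m)) :=
    map_bind_meas ζ hiid_meas hE
  have hiidE : Measurable (fun 𝔭 => (iid 𝔭).map (empShift n m)) :=
    (Measure.measurable_map _ hE).comp hiid_meas
  -- reduce the right-hand side
  have hRHS : R ^ (1 / p) ≤ wassW F p ζ (Measure.dirac p₀) := by
    refine le_csInf ⟨_, ζ.prod (Measure.dirac p₀), by simp, by simp, rfl⟩ ?_
    rintro _ ⟨γ, h1, h2, rfl⟩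
    refine le_of_eq ?_
    congr 1
    have h3 := ae_eq_of_map_dirac γ Prod.snd measurable_snd p₀ h2
    have h4 : ∫ z, F z.1 z.2 ^ p ∂γ = ∫ z, F z.1 p₀ ^ p ∂γ := by
      refine integral_congr_ae ?_
      filter_upwards [h3] with z hz
      rw [hz]
    rw [h4, hR]
    have h5 := integral_map (μ := γ) (φ := Prod.fst) (f := fun 𝔭 => F 𝔭 p₀ ^ p)
      measurable_fst.aemeasurable (by rw [h1]; exact hFm)
    rw [h1] at h5
    exact h5
  refine le_trans ?_ hRHS
  have hbdd : BddBelow {r : ℝ | ∃ γ : Measure (Measure S × Measure S),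
      γ.map Prod.fst = (ζ.bind iid).map (empShift n m) ∧
      γ.map Prod.snd = (iid p₀).map (empShift n m) ∧
      r = (∫ z, F z.1 z.2 ^ p ∂γ) ^ (1 / p)} := by
    refine ⟨0, ?_⟩
    rintro _ ⟨γ, -, -, rfl⟩
    exact Real.rpow_nonneg (integral_nonneg fun z => hFp _ _) _
  by_cases hint : Integrable (fun 𝔭 => F 𝔭 p₀ ^ p) ζ
  · have hRg : ENNReal.ofReal R = ∫⁻ 𝔭, g 𝔭 ∂ζ := by
      rw [hR, ofReal_integral_eq_lintegral_ofReal hint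
        (Filter.Eventually.of_forall fun 𝔭 => hFp _ _)]
      exact lintegral_congr_ae hζg
    have hmain : ∀ ε : ℝ, 0 < ε → wassW F p ((ζ.bind iid).map (empShift n m))
        ((iid p₀).map (empShift n m)) ≤ (R + ε) ^ (1 / p) := by
      intro ε hε
      obtain ⟨K, hKM, hK1, hK2⟩ := hsel (ENNReal.ofReal ε) (by simpa using hε)
      set Q : Measure S → Measure (Fin m → S × S) := fun 𝔭 => Measure.pi (fun _ => K 𝔭) with hQ
      have hQm : Measurable Q := measurable_pi_kernel K m
      set G : (Fin m → S × S) → Measure S × Measure S := fun v =>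
        (empF m (fun i => (v i).1), empF m (fun i => (v i).2)) with hG
      have hG1 : Measurable (fun v : Fin m → S × S => empF m (fun i => (v i).1)) :=
        (empF_measurable m).comp (by fun_prop)
      have hG2 : Measurable (fun v : Fin m → S × S => empF m (fun i => (v i).2)) :=
        (empF_measurable m).comp (by fun_prop)
      have hGm : Measurable G := hG1.prodMk hG2
      have hm1 : ∀ 𝔭, (Q 𝔭).map (fun v => empF m (fun i => (v i).1))
          = (Measure.pi (fun _ : Fin m => κ 𝔭)).map (empF m) := by
        intro 𝔭
        have hpr : IsProbabilityMeasure ((K 𝔭).map Prod.fst) := by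
          rw [(hK1 𝔭).1]; infer_instance
        have h1 := Measure.pi_map_pi (μ := fun _ : Fin m => K 𝔭)
          (f := fun _ => (Prod.fst : S × S → S)) (fun _ => measurable_fst.aemeasurable)
        rw [(hK1 𝔭).1] at h1
        rw [← h1, Measure.map_map (empF_measurable m) (by fun_prop)]
        rfl
      have hm2 : ∀ 𝔭, (Q 𝔭).map (fun v => empF m (fun i => (v i).2))
          = (Measure.pi (fun _ : Fin m => p₀)).map (empF m) := by
        intro 𝔭
        have hpr : IsProbabilityMeasure ((K 𝔭).map Prod.snd) := by
          rw [(hK1 𝔭).2]; infer_instance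
        have h1 := Measure.pi_map_pi (μ := fun _ : Fin m => K 𝔭)
          (f := fun _ => (Prod.snd : S × S → S)) (fun _ => measurable_snd.aemeasurable)
        rw [(hK1 𝔭).2] at h1
        rw [← h1, Measure.map_map (empF_measurable m) (by fun_prop)]
        rfl
      refine (csInf_le hbdd ⟨(ζ.bind Q).map G, ?_, ?_, rfl⟩).trans ?_
      · rw [Measure.map_map measurable_fst hGm]
        change (ζ.bind Q).map (fun v => empF m (fun i => (v i).1)) = _
        rw [map_bind_meas ζ hQm hG1, hμ₁]
        refine Measure.bind_congr_right ?_
        filter_upwards [hζ1] with 𝔭 h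
        rw [hm1, hκ 𝔭 h.1, hlaw 𝔭 h.1]
      · rw [Measure.map_map measurable_snd hGm]
        change (ζ.bind Q).map (fun v => empF m (fun i => (v i).2)) = _
        rw [map_bind_meas ζ hQm hG2]
        simp_rw [hm2]
        rw [Measure.bind_const, hlaw p₀ hp₀P]
        simp
      · refine Real.rpow_le_rpow (integral_nonneg fun z => hFp _ _) ?_ (by positivity)
        refine integral_le_of_lint (fun z => hFp _ _) (by positivity) ?_
        refine (lintegral_map_le _ _).trans ?_
        have hpt : ∀ v : Fin m → S × S, ENNReal.ofReal (F (G v).1 (G v).2 ^ p)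
            ≤ (m : ℝ≥0∞)⁻¹ * ∑ i, edist (v i).1 (v i).2 ^ p := by
          intro v
          have i1 := empF_prob hm (fun i => (v i).1)
          have i2 := empF_prob hm (fun i => (v i).2)
          rw [hF, wassW_eq hp (G v).1 (G v).2 x₀ (hMemp _) (hMemp _)]
          refine (ecostW_le (empF m v) (empF_map m v measurable_fst)
            (empF_map m v measurable_snd)).trans ?_
          rw [empF_lintegral m v (f := fun z => edist z.1 z.2 ^ p) (by fun_prop)]
        refine (lintegral_mono hpt).trans ?_
        rw [Measure.lintegral_bind hQm.aemeasurable (by fun_prop)]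
        have hin : ∀ 𝔭, ∫⁻ v, (m : ℝ≥0∞)⁻¹ * ∑ i, edist (v i).1 (v i).2 ^ p ∂(Q 𝔭)
            = ∫⁻ z, edist z.1 z.2 ^ p ∂(K 𝔭) := by
          intro 𝔭
          rw [lintegral_const_mul _ (by fun_prop), lintegral_finsetSum _ (fun i _ => by fun_prop)]
          have h1 : ∀ i : Fin m, ∫⁻ v, edist (v i).1 (v i).2 ^ p ∂(Q 𝔭)
              = ∫⁻ z, edist z.1 z.2 ^ p ∂(K 𝔭) := fun i =>
            (measurePreserving_eval (fun _ : Fin m => K 𝔭) i).lintegral_comp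
              (f := fun z => edist z.1 z.2 ^ p) (by fun_prop)
          simp_rw [h1]
          have hm0 : (m : ℝ≥0∞) ≠ 0 := by exact_mod_cast (by omega : m ≠ 0)
          simp [← mul_assoc, ENNReal.inv_mul_cancel hm0 (ENNReal.natCast_ne_top m)]
        simp_rw [hin]
        have hle : ∀ᵐ 𝔭 ∂ζ, ∫⁻ z, edist z.1 z.2 ^ p ∂(K 𝔭) ≤ g 𝔭 + ENNReal.ofReal ε := by
          filter_upwards [hζ1] with 𝔭 h
          have h1 : ∫⁻ x, edist x x₀ ^ p ∂(κ 𝔭) ≠ ∞ := by rw [hκ 𝔭 h.1]; exact h.2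
          rw [← hg 𝔭 h1]
          exact hK2 𝔭 h1
        refine (lintegral_mono_ae hle).trans ?_
        rw [lintegral_add_left hgm, ← hRg, ENNReal.ofReal_add hR0 hε.le]
        simp
    have hlim : Filter.Tendsto (fun ε : ℝ => (R + ε) ^ (1 / p)) (nhdsWithin 0 (Set.Ioi 0))
        (nhds (R ^ (1 / p))) := by
      have hc : Continuous (fun ε : ℝ => (R + ε) ^ (1 / p)) :=
        (continuous_const.add continuous_id).rpow_const (fun _ => Or.inr (by positivity))
      have := hc.tendsto 0
      simp only [add_zero] at this
      exact this.mono_left nhdsWithin_le_nhds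
    refine ge_of_tendsto hlim ?_
    filter_upwards [self_mem_nhdsWithin] with ε hε
    exact hmain ε hε
  · have hRz : R = 0 := integral_undef hint
    have hae : ∀ μ : Measure (ℕ → S), ∀ᵐ ν ∂(μ.map (empShift n m)),
        IsProbabilityMeasure ν ∧ M ν ≠ ∞ := by
      intro μ
      have hms : MeasurableSet {ν : Measure S | ν Set.univ = 1 ∧ M ν ≠ ∞} :=
        hPm.inter (hMm (measurableSet_singleton _).compl)
      have : ∀ᵐ ν ∂(μ.map (empShift n m)), ν Set.univ = 1 ∧ M ν ≠ ∞ := by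
        rw [ae_map_iff hE.aemeasurable hms]
        refine Filter.Eventually.of_forall fun ω => ?_
        rw [empShift_eq]
        exact ⟨(empF_prob hm _).measure_univ, hMemp _⟩
      filter_upwards [this] with ν h
      exact ⟨⟨h.1⟩, h.2⟩
    set μ₁ := (ζ.bind iid).map (empShift n m) with hμ₁d
    set μ₂ := (iid p₀).map (empShift n m) with hμ₂d
    have hP2 : IsProbabilityMeasure μ₂ := by
      have := (hiid p₀ hp₀P).1
      exact Measure.isProbabilityMeasure_map hE.aemeasurable
    have hP1 : IsProbabilityMeasure μ₁ := by
      constructor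
      rw [hμ₁, Measure.bind_apply MeasurableSet.univ hiidE.aemeasurable]
      have : ∀ᵐ 𝔭 ∂ζ, (iid 𝔭).map (empShift n m) Set.univ = 1 := by
        filter_upwards [hζ1] with 𝔭 h
        rw [Measure.map_apply hE MeasurableSet.univ, Set.preimage_univ]
        exact (hiid 𝔭 h.1).1.measure_univ
      rw [lintegral_congr_ae this]
      simp
    have hni : ¬ Integrable (fun z : Measure S × Measure S => F z.1 z.2 ^ p) (μ₁.prod μ₂) := by
      intro hI
      apply hint
      have hfin := hI.lintegral_lt_top
      have hM2 : ∫⁻ ν, M ν ∂μ₂ = M p₀ := by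
        rw [hμ₂d, hlaw p₀ hp₀P, lintegral_map hMm (empF_measurable m), hpi p₀ hp₀P]
      have hM1 : ∫⁻ ν, M ν ∂μ₁ = ∫⁻ 𝔭, M 𝔭 ∂ζ := by
        rw [hμ₁, Measure.lintegral_bind hiidE.aemeasurable hMm.aemeasurable]
        refine lintegral_congr_ae ?_
        filter_upwards [hζ1] with 𝔭 h
        rw [hlaw 𝔭 h.1, lintegral_map hMm (empF_measurable m), hpi 𝔭 h.1]
      have hle : ∀ᵐ z ∂(μ₁.prod μ₂), M z.1 ≤
          2 ^ (p - 1) * (ENNReal.ofReal (F z.1 z.2 ^ p) + M z.2) := by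
        have a1 : ∀ᵐ z ∂(μ₁.prod μ₂), IsProbabilityMeasure z.1 ∧ M z.1 ≠ ∞ :=
          Measure.quasiMeasurePreserving_fst.ae (hae _)
        have a2 : ∀ᵐ z ∂(μ₁.prod μ₂), IsProbabilityMeasure z.2 ∧ M z.2 ≠ ∞ :=
          Measure.quasiMeasurePreserving_snd.ae (hae _)
        filter_upwards [a1, a2] with z h1 h2
        have i1 := h1.1
        have i2 := h2.1
        rw [hF, wassW_eq hp z.1 z.2 x₀ h1.2 h2.2]
        exact moment_le_ecostW hp z.1 z.2 x₀
      have hMζ : ∫⁻ 𝔭, M 𝔭 ∂ζ < ∞ := by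
        rw [← hM1]
        have e1 : ∫⁻ ν, M ν ∂μ₁ = ∫⁻ z, M z.1 ∂(μ₁.prod μ₂) := by
          rw [← lintegral_map hMm measurable_fst]; simp
        have e2 : ∫⁻ ν, M ν ∂μ₂ = ∫⁻ z, M z.2 ∂(μ₁.prod μ₂) := by
          rw [← lintegral_map hMm measurable_snd]; simp
        rw [e1]
        refine (lintegral_mono_ae hle).trans_lt ?_
        rw [lintegral_const_mul' _ _ (two_rpow_ne_top hp),
          lintegral_add_right _ (show Measurable (fun z : Measure S × Measure S => M z.2)
            from hMm.comp measurable_snd)]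
        refine ENNReal.mul_lt_top (two_rpow_ne_top hp).lt_top (ENNReal.add_lt_top.2 ⟨hfin, ?_⟩)
        rw [← e2, hM2]
        exact hM0.lt_top
      refine ⟨hFm, ?_⟩
      rw [hasFiniteIntegral_iff_ofReal (Filter.Eventually.of_forall fun 𝔭 => hFp _ _)]
      have hle2 : ∀ᵐ 𝔭 ∂ζ, ENNReal.ofReal (F 𝔭 p₀ ^ p) ≤ 2 ^ (p - 1) * (M 𝔭 + M p₀) := by
        filter_upwards [hζ1] with 𝔭 h
        have i1 := h.1
        rw [hF, wassW_eq hp 𝔭 p₀ x₀ h.2 hM0]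
        exact ecostW_le_moment hp 𝔭 p₀ x₀
      refine (lintegral_mono_ae hle2).trans_lt ?_
      rw [lintegral_const_mul' _ _ (two_rpow_ne_top hp), lintegral_add_left hMm]
      refine ENNReal.mul_lt_top (two_rpow_ne_top hp).lt_top (ENNReal.add_lt_top.2 ⟨hMζ, ?_⟩)
      simpa using hM0.lt_top
    refine csInf_le hbdd ⟨μ₁.prod μ₂, by simp, by simp, ?_⟩
    rw [integral_undef hni, hRz]

end
end
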